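/- arXiv:1310.0838 — 11 statements merged into one kernel-verified Lean document; each statement's English description precedes it below -/
import Mathlib

section
/- Let P be a finite poset, G a finite group acting on P by automorphisms, g ∈ G, and n ≥ 1. Then the map sending φ to the function [x]_g ↦ φ(x) is a bijection between the set Hom(P,[n])^g of order preserving maps P → [n] fixed by g and the set Hom(P_g,[n]) of order preserving maps from the quotient poset P_g to [n]. In particular, |Hom(P,[n])^g| = Ω_{P_g}(n). -/
/-- The relation on the set `P_g` of `⟨g⟩`-orbits of `P`: `[x]_g ≺ [y]_g` whenever there
exist representatives `x̃ ∈ [x]_g` and `ỹ ∈ [y]_g` with `x̃ ≺ ỹ` in `P`. -/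
def quotPosetRel {P G : Type*} [PartialOrder P] [Group G] [MulAction G P] (g : G)
    (a b : Quotient (MulAction.orbitRel (Subgroup.zpowers g) P)) : Prop :=
  ∃ x y : P, Quotient.mk (MulAction.orbitRel (Subgroup.zpowers g) P) x = a ∧
    Quotient.mk (MulAction.orbitRel (Subgroup.zpowers g) P) y = b ∧ x < y

/-- Let `P` be a finite poset, `G` a finite group acting on `P` by
automorphisms, `g ∈ G` and `n ≥ 1`.  The map sending `φ` to `[x]_g ↦ φ(x)` is a bijection
between the set `Hom(P,[n])^g` of order preserving maps `P → [n]` fixed by `g`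
(i.e. with `φ(g⁻¹ • x) = φ(x)` for all `x`) and the set `Hom(P_g,[n])` of order preserving
maps from the quotient poset `P_g` to `[n]`.  In particular the two sets have the same
cardinality, i.e. `|Hom(P,[n])^g| = Ω_{P_g}(n)`. -/
theorem stmt_2 {P G : Type*} [PartialOrder P] [Fintype P] [Group G] [Fintype G]
    [MulAction G P] (hact : ∀ (g : G) (p q : P), p < q → g • p < g • q)
    (g : G) (n : ℕ) (hn : 1 ≤ n) :
    (∃ F : {φ : P → Fin n // (∀ p q : P, p < q → φ p ≤ φ q) ∧ ∀ x : P, φ (g⁻¹ • x) = φ x} →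
        {ψ : Quotient (MulAction.orbitRel (Subgroup.zpowers g) P) → Fin n //
          ∀ a b, quotPosetRel (P := P) g a b → ψ a ≤ ψ b},
      Function.Bijective F ∧
        ∀ φ (x : P),
          (F φ).1 (Quotient.mk (MulAction.orbitRel (Subgroup.zpowers g) P) x) = φ.1 x) ∧
    Nat.card {φ : P → Fin n // (∀ p q : P, p < q → φ p ≤ φ q) ∧ ∀ x : P, φ (g⁻¹ • x) = φ x} =
      Nat.card {ψ : Quotient (MulAction.orbitRel (Subgroup.zpowers g) P) → Fin n //
        ∀ a b, quotPosetRel (P := P) g a b → ψ a ≤ ψ b} := by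
  have key : ∃ F : {φ : P → Fin n //
        (∀ p q : P, p < q → φ p ≤ φ q) ∧ ∀ x : P, φ (g⁻¹ • x) = φ x} →
        {ψ : Quotient (MulAction.orbitRel (Subgroup.zpowers g) P) → Fin n //
          ∀ a b, quotPosetRel (P := P) g a b → ψ a ≤ ψ b},
      Function.Bijective F ∧
        ∀ φ (x : P),
          (F φ).1 (Quotient.mk (MulAction.orbitRel (Subgroup.zpowers g) P) x) = φ.1 x := by
    have inv : ∀ φ : P → Fin n, (∀ x : P, φ (g⁻¹ • x) = φ x) →
        ∀ a b : P, (MulAction.orbitRel (Subgroup.zpowers g) P) a b → φ a = φ b := by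
      intro φ h a b hab
      rw [MulAction.orbitRel_apply] at hab
      obtain ⟨⟨k, hk⟩, rfl⟩ := hab
      obtain ⟨m, rfl⟩ := Subgroup.mem_zpowers_iff.mp hk
      change φ (g ^ m • b) = φ b
      clear hk
      induction m with
      | zero => simp
      | succ i ih =>
        rw [← ih, ← h (g ^ ((i : ℤ) + 1) • b), smul_smul]
        congr 2
        group
      | pred i ih =>
        rw [← ih, ← h (g ^ (-(i : ℤ)) • b), smul_smul]
        congr 2
        group
    refine ⟨fun φ => ⟨Quotient.lift φ.1 (inv φ.1 φ.2.2), ?_⟩, ⟨?_, ?_⟩, ?_⟩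
    · rintro a b ⟨x, y, rfl, rfl, hxy⟩
      exact φ.2.1 x y hxy
    · intro φ φ' h
      apply Subtype.ext
      funext x
      exact congrFun (congrArg Subtype.val h) (Quotient.mk _ x)
    · intro ψ
      refine ⟨⟨fun x => ψ.1 (Quotient.mk _ x), ?_, ?_⟩, ?_⟩
      · intro p q hpq
        exact ψ.2 _ _ ⟨p, q, rfl, rfl, hpq⟩
      · intro x
        apply congrArg ψ.1
        apply Quotient.sound
        change (MulAction.orbitRel (Subgroup.zpowers g) P) _ _
        rw [MulAction.orbitRel_apply]
        exact ⟨⟨g⁻¹, inv_mem (Subgroup.mem_zpowers g)⟩, rfl⟩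
      · apply Subtype.ext
        funext a
        induction a using Quotient.inductionOn
        rfl
    · intro φ x
      rfl
  refine ⟨key, ?_⟩
  obtain ⟨F, hF, -⟩ := key
  exact Nat.card_congr (Equiv.ofBijective F hF)
end

section
/- Let P be a finite poset and G a finite group acting on P by automorphisms. Then for all n ≥ 1, the number of G-orbits of order preserving maps P → [n] satisfies Ω_{P,G}(n) = |Hom(P,[n])/G| = (1/|G|) · Σ_{g∈G} Ω_{P_g}(n), where the sum ranges over all g ∈ G and P_g is the quotient poset of P by ⟨g⟩. -/
/-- Let `P` be a finite poset and `G` a finite group acting on `P` by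
automorphisms.  For all `n ≥ 1`, the number of `G`-orbits of order preserving maps
`P → [n]` (where `(g • φ)(x) = φ(g⁻¹ • x)`) satisfies
`Ω_{P,G}(n) = |Hom(P,[n])/G| = (1/|G|) · Σ_{g ∈ G} Ω_{P_g}(n)`,
where `Ω_{P_g}(n)` is the number of order preserving maps from the quotient poset `P_g`
to `[n]`. -/
theorem stmt_3 {P G : Type*} [PartialOrder P] [Fintype P] [Group G] [Fintype G]
    [MulAction G P] (hact : ∀ (g : G) (p q : P), p < q → g • p < g • q)
    (n : ℕ) (hn : 1 ≤ n) :
    (Nat.card (Quot (fun φ ψ : {φ : P → Fin n // ∀ p q : P, p < q → φ p ≤ φ q} =>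
        ∃ g : G, ∀ x : P, ψ.1 x = φ.1 (g⁻¹ • x))) : ℚ) =
      (Fintype.card G : ℚ)⁻¹ * ∑ g : G,
        (Nat.card {ψ : Quotient (MulAction.orbitRel (Subgroup.zpowers g) P) → Fin n //
          ∀ a b, quotPosetRel (P := P) g a b → ψ a ≤ ψ b} : ℚ) := by
  classical
  letI act : MulAction G {φ : P → Fin n // ∀ p q : P, p < q → φ p ≤ φ q} :=
    { smul := fun g φ => ⟨fun x => φ.1 (g⁻¹ • x), fun p q h => φ.2 _ _ (hact g⁻¹ p q h)⟩
      one_smul := fun φ => Subtype.ext (funext fun x => by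
        change φ.1 ((1 : G)⁻¹ • x) = φ.1 x
        simp)
      mul_smul := fun g h φ => Subtype.ext (funext fun x => by
        change φ.1 ((g * h)⁻¹ • x) = φ.1 (h⁻¹ • g⁻¹ • x)
        rw [mul_inv_rev, mul_smul]) }
  have hsmul : ∀ (g : G) (φ : {φ : P → Fin n // ∀ p q : P, p < q → φ p ≤ φ q}) (x : P),
      (g • φ).1 x = φ.1 (g⁻¹ • x) := fun _ _ _ => rfl
  have hfin : Finite {φ : P → Fin n // ∀ p q : P, p < q → φ p ≤ φ q} := inferInstance
  letI : Fintype (Quotient (MulAction.orbitRel G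
      {φ : P → Fin n // ∀ p q : P, p < q → φ p ≤ φ q})) := Fintype.ofFinite _
  letI : ∀ g : G, Fintype (MulAction.fixedBy
      {φ : P → Fin n // ∀ p q : P, p < q → φ p ≤ φ q} g) := fun g => Fintype.ofFinite _
  have burn := MulAction.sum_card_fixedBy_eq_card_orbits_mul_card_group G
    {φ : P → Fin n // ∀ p q : P, p < q → φ p ≤ φ q}
  -- orbits
  have horb : Nat.card (Quot (fun φ ψ : {φ : P → Fin n // ∀ p q : P, p < q → φ p ≤ φ q} =>
        ∃ g : G, ∀ x : P, ψ.1 x = φ.1 (g⁻¹ • x))) =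
      Fintype.card (Quotient (MulAction.orbitRel G
        {φ : P → Fin n // ∀ p q : P, p < q → φ p ≤ φ q})) := by
    rw [← Nat.card_eq_fintype_card]
    refine Nat.card_congr (Quot.congrRight fun φ ψ => ?_)
    change _ ↔ (MulAction.orbitRel G _).r φ ψ
    constructor
    · rintro ⟨g, hg⟩
      refine Setoid.symm' _ (MulAction.orbitRel_apply.2 ⟨g, ?_⟩)
      exact Subtype.ext (funext fun x => (hg x).symm)
    · intro h
      obtain ⟨g, hg⟩ := MulAction.orbitRel_apply.1 (Setoid.symm' _ h)
      exact ⟨g, fun x => by rw [← hg]; rfl⟩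
  -- fixed points
  have hfix : ∀ g : G, Fintype.card (MulAction.fixedBy
      {φ : P → Fin n // ∀ p q : P, p < q → φ p ≤ φ q} g) =
      Nat.card {ψ : Quotient (MulAction.orbitRel (Subgroup.zpowers g) P) → Fin n //
          ∀ a b, quotPosetRel (P := P) g a b → ψ a ≤ ψ b} := by
    intro g
    rw [← Nat.card_eq_fintype_card]
    symm
    refine Nat.card_congr (Equiv.ofBijective (fun ψ => ⟨⟨fun x => ψ.1 (Quotient.mk _ x),
      fun p q h => ψ.2 _ _ ⟨p, q, rfl, rfl, h⟩⟩, ?_⟩) ⟨?_, ?_⟩)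
    · refine Subtype.ext (funext fun x => ?_)
      rw [hsmul]
      change ψ.1 _ = ψ.1 _
      refine congrArg ψ.1 (Quotient.sound ?_)
      exact MulAction.orbitRel_apply.2 ⟨⟨g⁻¹, by simp⟩, rfl⟩
    · intro ψ₁ ψ₂ h
      refine Subtype.ext (funext fun a => ?_)
      induction a using Quotient.inductionOn with
      | h x => exact congrFun (congrArg (fun f => f.1.1) h) x
    · rintro ⟨φ, hφ⟩
      have key : ∀ a b : P, (MulAction.orbitRel (Subgroup.zpowers g) P).r a b →
          φ.1 a = φ.1 b := by
        intro a b h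
        obtain ⟨⟨k, hk⟩, rfl⟩ := MulAction.orbitRel_apply.1 h
        have h1 : g ∈ MulAction.stabilizer G φ := hφ
        have h2 : k⁻¹ ∈ MulAction.stabilizer G φ :=
          inv_mem ((Subgroup.zpowers_le.2 h1) hk)
        have h3 : k⁻¹ • φ = φ := h2
        have h4 := hsmul k⁻¹ φ b
        rw [h3, inv_inv] at h4
        exact h4.symm
      refine ⟨⟨fun a => Quotient.lift φ.1 key a, ?_⟩, ?_⟩
      · rintro a b ⟨x, y, rfl, rfl, h⟩
        exact φ.2 x y h
      · rfl
  have hG : (Fintype.card G : ℚ) ≠ 0 := by exact_mod_cast Fintype.card_ne_zero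
  rw [horb, eq_inv_mul_iff_mul_eq₀ hG, mul_comm]
  simp only [← hfix]
  exact_mod_cast burn.symm
end

section
/- Let P be a finite poset and G a finite group acting on P by automorphisms. Then for all n ≥ 1, the number of G-orbits of strictly order preserving maps P → [n] satisfies Ω°_{P,G}(n) = |Hom°(P,[n])/G| = (1/|G|) · Σ_{g∈G} Ω°_{P_g}(n), where the sum ranges over all g ∈ G and P_g is the quotient poset of P by ⟨g⟩. -/
/-- The action of `G` on strictly order preserving maps. -/
@[reducible]
def homAction {P G : Type*} [PartialOrder P] [Group G]
    [MulAction G P] (hact : ∀ (g : G) (p q : P), p < q → g • p < g • q) (n : ℕ) :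
    MulAction G {φ : P → Fin n // ∀ p q : P, p < q → φ p < φ q} where
  smul g φ := ⟨fun x => φ.1 (g⁻¹ • x), fun p q h => φ.2 _ _ (hact _ _ _ h)⟩
  one_smul φ := by
    apply Subtype.ext
    funext x
    change φ.1 ((1 : G)⁻¹ • x) = φ.1 x
    simp
  mul_smul a b φ := by
    apply Subtype.ext
    funext x
    change φ.1 ((a * b)⁻¹ • x) = φ.1 (b⁻¹ • a⁻¹ • x)
    rw [mul_inv_rev, mul_smul]

theorem fixed_zpow {P G α : Type*} [Group G] [MulAction G P] (g : G) (φ : P → α)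
    (h : ∀ x, φ (g⁻¹ • x) = φ x) (k : Subgroup.zpowers g) (x : P) : φ (k • x) = φ x := by
  obtain ⟨k, m, rfl⟩ := k
  change φ (g ^ m • x) = φ x
  have h1 : ∀ x, φ (g • x) = φ x := fun x => by
    have := h (g • x)
    rw [inv_smul_smul] at this
    exact this.symm
  induction m using Int.induction_on generalizing x with
  | zero => simp
  | succ i ih => rw [zpow_add_one, mul_smul, ih, h1]
  | pred i ih => rw [zpow_sub_one, mul_smul, ih, h]

/-- Fixed maps correspond to maps on the quotient poset. -/
def fixedEquiv {P G : Type*} [PartialOrder P] [Group G]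
    [MulAction G P] (n : ℕ) (g : G) :
    {φ : {φ : P → Fin n // ∀ p q : P, p < q → φ p < φ q} // ∀ x, φ.1 (g⁻¹ • x) = φ.1 x} ≃
    {ψ : Quotient (MulAction.orbitRel (Subgroup.zpowers g) P) → Fin n //
          ∀ a b, quotPosetRel (P := P) g a b → ψ a < ψ b} where
  toFun φ := ⟨Quotient.lift φ.1.1 (by
      rintro a b ⟨k, rfl⟩
      exact fixed_zpow g φ.1.1 φ.2 k b), by
      rintro a b ⟨x, y, rfl, rfl, h⟩
      exact φ.1.2 x y h⟩
  invFun ψ := ⟨⟨fun x => ψ.1 (Quotient.mk _ x), fun p q h => ψ.2 _ _ ⟨p, q, rfl, rfl, h⟩⟩, by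
      intro x
      change ψ.1 _ = ψ.1 _
      refine congrArg ψ.1 ?_
      refine Quotient.sound (s := MulAction.orbitRel (Subgroup.zpowers g) P) ?_
      exact ⟨⟨g⁻¹, inv_mem (Subgroup.mem_zpowers g)⟩, rfl⟩⟩
  left_inv φ := rfl
  right_inv ψ := by
    apply Subtype.ext
    funext a
    induction a using Quotient.inductionOn
    rfl

/-- Let `P` be a finite poset and `G` a finite group acting on `P` by
automorphisms.  For all `n ≥ 1`, the number of `G`-orbits of strictly order preserving
maps `P → [n]` (where `(g • φ)(x) = φ(g⁻¹ • x)`) satisfies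
`Ω°_{P,G}(n) = |Hom°(P,[n])/G| = (1/|G|) · Σ_{g ∈ G} Ω°_{P_g}(n)`,
where `Ω°_{P_g}(n)` is the number of strictly order preserving maps from the quotient
poset `P_g` to `[n]`. -/
theorem stmt_4 {P G : Type*} [PartialOrder P] [Fintype P] [Group G] [Fintype G]
    [MulAction G P] (hact : ∀ (g : G) (p q : P), p < q → g • p < g • q)
    (n : ℕ) (hn : 1 ≤ n) :
    (Nat.card (Quot (fun φ ψ : {φ : P → Fin n // ∀ p q : P, p < q → φ p < φ q} =>
        ∃ g : G, ∀ x : P, ψ.1 x = φ.1 (g⁻¹ • x))) : ℚ) =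
      (Fintype.card G : ℚ)⁻¹ * ∑ g : G,
        (Nat.card {ψ : Quotient (MulAction.orbitRel (Subgroup.zpowers g) P) → Fin n //
          ∀ a b, quotPosetRel (P := P) g a b → ψ a < ψ b} : ℚ) := by
  classical
  let X := {φ : P → Fin n // ∀ p q : P, p < q → φ p < φ q}
  let inst : MulAction G X := homAction hact n
  have hs : ∀ (g : G) (φ : X) (x : P), (g • φ).1 x = φ.1 (g⁻¹ • x) := fun _ _ _ => rfl
  have hB := MulAction.sum_card_fixedBy_eq_card_orbits_mul_card_group G X
  have h1 : Nat.card (Quot (fun φ ψ : X => ∃ g : G, ∀ x : P, ψ.1 x = φ.1 (g⁻¹ • x))) =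
      Fintype.card (Quotient (MulAction.orbitRel G X)) := by
    rw [← Nat.card_eq_fintype_card]
    refine Nat.card_congr (Quot.congrRight fun φ ψ => ?_)
    change _ ↔ φ ∈ MulAction.orbit G ψ
    rw [MulAction.mem_orbit_symm]
    constructor
    · rintro ⟨g, h⟩
      exact ⟨g, Subtype.ext (funext fun x => (h x).symm)⟩
    · rintro ⟨g, rfl⟩
      exact ⟨g, fun x => rfl⟩
  have h2 : ∀ g : G, Nat.card {ψ : Quotient (MulAction.orbitRel (Subgroup.zpowers g) P) → Fin n //
          ∀ a b, quotPosetRel (P := P) g a b → ψ a < ψ b} =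
      Fintype.card (MulAction.fixedBy X g) := by
    intro g
    rw [← Nat.card_eq_fintype_card, ← Nat.card_congr (fixedEquiv n g)]
    refine Nat.card_congr (Equiv.subtypeEquivRight fun φ => ?_)
    rw [MulAction.mem_fixedBy]
    constructor
    · intro h
      exact Subtype.ext (funext h)
    · intro h x
      rw [← hs g φ x, h]
  have hG : (Fintype.card G : ℚ) ≠ 0 := by
    exact_mod_cast Fintype.card_ne_zero
  rw [h1, eq_inv_mul_iff_mul_eq₀ hG, mul_comm]
  simp only [h2]
  exact_mod_cast hB.symm
end

section
/- Let P be a finite poset and G a finite group acting on P by automorphisms. Then there exists a polynomial p of degree exactly |P| (with rational coefficients) such that for all integers n ≥ 1, p(n) equals the number of G-orbits of order preserving maps P → [n], i.e., p(n) = |Hom(P,[n])/G|. -/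
namespace OrbAux

/-- Order preserving surjections onto `Fin k`. -/
def Surj (P : Type*) [PartialOrder P] (k : ℕ) : Type _ :=
  {φ : P → Fin k // (∀ p q : P, p < q → φ p ≤ φ q) ∧ Function.Surjective φ}

/-- The orbit relation on surjections. -/
def srel (P G : Type*) [PartialOrder P] [Group G] [MulAction G P] (k : ℕ) (φ ψ : Surj P k) : Prop :=
  ∃ g : G, ∀ x : P, ψ.1 x = φ.1 (g⁻¹ • x)

/-- The orbit relation on all order preserving maps. -/
def hrel (P G : Type*) [PartialOrder P] [Group G] [MulAction G P] (n : ℕ)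
    (φ ψ : {φ : P → Fin n // ∀ p q : P, p < q → φ p ≤ φ q}) : Prop :=
  ∃ g : G, ∀ x : P, ψ.1 x = φ.1 (g⁻¹ • x)

theorem hrel_equiv (P G : Type*) [PartialOrder P] [Group G] [MulAction G P] (n : ℕ) :
    Equivalence (hrel P G n) where
  refl φ := ⟨1, by simp⟩
  symm := by
    rintro φ ψ ⟨g, hg⟩
    exact ⟨g⁻¹, fun x => by simp [hg]⟩
  trans := by
    rintro φ ψ χ ⟨g, hg⟩ ⟨h, hh⟩
    exact ⟨h * g, fun x => by simp [hg, hh, mul_smul]⟩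

/-- Compose a surjection with the increasing enumeration of `S`. -/
def push {P : Type*} [PartialOrder P] {n : ℕ} (S : Finset (Fin n)) (φ : Surj P S.card) :
    {φ : P → Fin n // ∀ p q : P, p < q → φ p ≤ φ q} :=
  ⟨fun x => S.orderEmbOfFin rfl (φ.1 x), fun p q h => by
    simpa using φ.2.1 p q h⟩

theorem range_push {P : Type*} [PartialOrder P] {n : ℕ} (S : Finset (Fin n)) (φ : Surj P S.card) :
    Set.range (push S φ).1 = (S : Set (Fin n)) := by
  rw [← S.range_orderEmbOfFin rfl]
  exact φ.2.2.range_comp (S.orderEmbOfFin rfl)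

/-- The decomposition map. -/
def F (P G : Type*) [PartialOrder P] [Group G] [MulAction G P] (n : ℕ) :
    (Σ S : Finset (Fin n), Quot (srel P G S.card)) → Quot (hrel P G n) :=
  fun x => Quot.map (push x.1) (by
    rintro φ ψ ⟨g, hg⟩
    exact ⟨g, fun y => by simp [push, hg]⟩) x.2

theorem F_bij (P G : Type*) [PartialOrder P] [Group G] [MulAction G P] (n : ℕ) :
    Function.Bijective (F P G n) := by
  constructor
  · rintro ⟨S, a⟩ ⟨T, b⟩ h
    induction a using Quot.ind with | _ φ => ?_
    induction b using Quot.ind with | _ ψ => ?_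
    have h1 : hrel P G n (push S φ) (push T ψ) :=
      (hrel_equiv P G n).eqvGen_iff.1 (Quot.eqvGen_exact h)
    obtain ⟨g, hg⟩ := h1
    have hr : Set.range (push S φ).1 = Set.range (push T ψ).1 := by
      have : (push T ψ).1 = (push S φ).1 ∘ (fun x : P => g⁻¹ • x) := funext hg
      rw [this, (MulAction.surjective g⁻¹).range_comp]
    rw [range_push, range_push] at hr
    have hST := Finset.coe_injective hr
    subst hST
    congr 1
    apply Quot.sound
    exact ⟨g, fun x => (S.orderEmbOfFin rfl).injective (hg x)⟩
  · intro q
    induction q using Quot.ind with | _ φ => ?_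
    classical
    set S : Finset (Fin n) := (Set.range φ.1).toFinite.toFinset with hS
    have hmem : ∀ x, φ.1 x ∈ S := fun x => by simp [hS]
    let e := S.orderIsoOfFin rfl
    refine ⟨⟨S, Quot.mk _ ⟨fun x => e.symm ⟨φ.1 x, hmem x⟩, ?_, ?_⟩⟩, ?_⟩
    · intro p q h
      rw [e.symm.le_iff_le]
      exact φ.2 p q h
    · intro i
      have hm : ∀ y, y ∈ S → ∃ x, φ.1 x = y := fun y hy => by simpa [hS] using hy
      obtain ⟨x, hx⟩ := hm _ (e i).2
      refine ⟨x, ?_⟩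
      rw [OrderIso.symm_apply_eq]
      exact Subtype.ext hx
    · refine congrArg (Quot.mk _) (Subtype.ext (funext fun x => ?_))
      change S.orderEmbOfFin rfl (e.symm ⟨φ.1 x, hmem x⟩) = φ.1 x
      rw [← Finset.coe_orderIsoOfFin_apply]
      simp [e]

instance finS (P : Type*) [PartialOrder P] [Finite P] (k : ℕ) : Finite (Surj P k) := by
  unfold Surj; infer_instance

theorem card_eq (P G : Type*) [PartialOrder P] [Finite P] [Group G] [MulAction G P] (n : ℕ) :
    Nat.card (Quot (hrel P G n)) =
      ∑ k ∈ Finset.range (n + 1), n.choose k * Nat.card (Quot (srel P G k)) := by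
  rw [← Nat.card_eq_of_bijective _ (F_bij P G n), Nat.card_sigma]
  have := Finset.sum_powerset_apply_card (fun k => Nat.card (Quot (srel P G k)))
    (x := (Finset.univ : Finset (Fin n)))
  simpa using this

theorem s_zero (P G : Type*) [PartialOrder P] [Fintype P] [Group G] [MulAction G P] (k : ℕ)
    (hk : Fintype.card P < k) : Nat.card (Quot (srel P G k)) = 0 := by
  have : IsEmpty (Surj P k) := ⟨fun φ => by
    have := Fintype.card_le_of_surjective _ φ.2.2
    simp at this
    omega⟩
  have : IsEmpty (Quot (srel P G k)) := ⟨fun q => by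
    induction q using Quot.ind with | _ φ => exact this.false φ⟩
  simp

theorem s_pos (P G : Type*) [PartialOrder P] [Fintype P] [Group G] [MulAction G P] :
    Nat.card (Quot (srel P G (Fintype.card P))) ≠ 0 := by
  letI : Fintype (LinearExtension P) := ‹Fintype P›
  let e : Fin (Fintype.card P) ≃o LinearExtension P :=
    Fintype.orderIsoFinOfCardEq (LinearExtension P) rfl
  let φ : Surj P (Fintype.card P) := ⟨fun x => e.symm (toLinearExtension x),
    fun p q h => e.symm.monotone (toLinearExtension.monotone h.le), fun i => ⟨e i, e.symm_apply_apply i⟩⟩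
  have : Nonempty (Quot (srel P G (Fintype.card P))) := ⟨Quot.mk _ φ⟩
  exact Nat.pos_iff_ne_zero.1 Nat.card_pos

/-- The binomial polynomial. -/
noncomputable def bp (k : ℕ) : Polynomial ℚ := Polynomial.C ((k.factorial : ℚ)⁻¹) * descPochhammer ℚ k

theorem bp_eval (k n : ℕ) : (bp k).eval (n : ℚ) = n.choose k := by
  have h : (k.factorial : ℚ) ≠ 0 := by exact_mod_cast k.factorial_ne_zero
  rw [bp, Polynomial.eval_mul, Polynomial.eval_C, descPochhammer_eval_eq_descFactorial,
    Nat.descFactorial_eq_factorial_mul_choose]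
  push_cast
  field_simp

theorem bp_degree (k : ℕ) : (bp k).degree = k := by
  have h : (k.factorial : ℚ)⁻¹ ≠ 0 := inv_ne_zero (by exact_mod_cast k.factorial_ne_zero)
  rw [bp, Polynomial.degree_C_mul h, Polynomial.degree_eq_natDegree (monic_descPochhammer ℚ k).ne_zero,
    descPochhammer_natDegree]

end OrbAux

open OrbAux in
/-- Let `P` be a finite poset and `G` a finite group acting on `P` by
automorphisms.  There exists a polynomial `p` with rational coefficients of degree
exactly `|P|` such that for all integers `n ≥ 1`, `p(n)` equals the number of
`G`-orbits of order preserving maps `P → [n]` (the action being `(g • φ)(x) = φ(g⁻¹ • x)`). -/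
theorem stmt_5 {P G : Type*} [PartialOrder P] [Fintype P] [Group G] [Fintype G]
    [MulAction G P] (hact : ∀ (g : G) (p q : P), p < q → g • p < g • q) :
    ∃ p : Polynomial ℚ, p.degree = (Fintype.card P : WithBot ℕ) ∧
      ∀ n : ℕ, 1 ≤ n →
        p.eval (n : ℚ) =
          Nat.card (Quot (fun φ ψ : {φ : P → Fin n // ∀ p q : P, p < q → φ p ≤ φ q} =>
            ∃ g : G, ∀ x : P, ψ.1 x = φ.1 (g⁻¹ • x))) := by
  refine ⟨∑ k ∈ Finset.range (Fintype.card P + 1),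
    Polynomial.C (Nat.card (Quot (srel P G k)) : ℚ) * bp k, ?_, fun n _ => ?_⟩
  · have hc : (Nat.card (Quot (srel P G (Fintype.card P))) : ℚ) ≠ 0 := by
      exact_mod_cast s_pos P G
    rw [Finset.sum_range_succ, Polynomial.degree_add_eq_right_of_degree_lt]
    · rw [Polynomial.degree_C_mul hc, bp_degree]
    · rw [Polynomial.degree_C_mul hc, bp_degree, ← Polynomial.mem_degreeLT]
      refine Submodule.sum_mem _ fun k hk => ?_
      rw [Polynomial.mem_degreeLT]
      rw [← Polynomial.smul_eq_C_mul]
      refine lt_of_le_of_lt (Polynomial.degree_smul_le _ _) ?_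
      rw [bp_degree]
      exact_mod_cast Finset.mem_range.1 hk
  · change _ = ((Nat.card (Quot (hrel P G n)) : ℕ) : ℚ)
    rw [card_eq, Polynomial.eval_finsetSum]
    simp only [Polynomial.eval_mul, Polynomial.eval_C, bp_eval]
    push_cast
    have h1 : ∀ m N : ℕ, m ≤ N → (∀ k, m < k →
        (Nat.card (Quot (srel P G k)) : ℚ) * (n.choose k : ℚ) = 0) →
        ∑ k ∈ Finset.range (m + 1), (Nat.card (Quot (srel P G k)) : ℚ) * (n.choose k : ℚ) =
        ∑ k ∈ Finset.range (N + 1), (Nat.card (Quot (srel P G k)) : ℚ) * (n.choose k : ℚ) := by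
      intro m N hm h0
      refine Finset.sum_subset (Finset.range_mono (by omega)) fun k _ hk => h0 k ?_
      simp only [Finset.mem_range] at hk
      omega
    rw [h1 _ (max (Fintype.card P) n) (le_max_left _ _) fun k hk => by simp [s_zero P G k hk],
      ← h1 _ (max (Fintype.card P) n) (le_max_right _ _) fun k hk => by
        simp [Nat.choose_eq_zero_of_lt hk]]
    exact Finset.sum_congr rfl fun k _ => mul_comm _ _
end

section
/- Let P be a finite poset and G a finite group acting on P by automorphisms. Then there exists a polynomial p of degree exactly |P| (with rational coefficients) such that for all integers n ≥ 1, p(n) equals the number of G-orbits of strictly order preserving maps P → [n], i.e., p(n) = |Hom°(P,[n])/G|. -/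
/-- The orbit relation on surjective strict maps onto `Fin k`. -/
def surjRel (P G : Type*) [PartialOrder P] [Group G] [MulAction G P] (k : ℕ)
    (φ ψ : {φ : P → Fin k // (∀ p q : P, p < q → φ p < φ q) ∧ Function.Surjective φ}) : Prop :=
  ∃ g : G, ∀ x : P, ψ.1 x = φ.1 (g⁻¹ • x)

/-- The orbit relation on strict maps. -/
def homRel (P G : Type*) [PartialOrder P] [Group G] [MulAction G P] (n : ℕ)
    (φ ψ : {φ : P → Fin n // ∀ p q : P, p < q → φ p < φ q}) : Prop :=
  ∃ g : G, ∀ x : P, ψ.1 x = φ.1 (g⁻¹ • x)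

theorem homRel_equivalence (P G : Type*) [PartialOrder P] [Group G] [MulAction G P] (n : ℕ) :
    Equivalence (homRel P G n) where
  refl φ := ⟨1, fun x => by simp⟩
  symm := by
    rintro φ ψ ⟨g, hg⟩
    exact ⟨g⁻¹, fun x => by rw [hg]; simp⟩
  trans := by
    rintro φ ψ χ ⟨g, hg⟩ ⟨h, hh⟩
    exact ⟨h * g, fun x => by rw [hh, hg, mul_inv_rev, mul_smul]⟩

/-- Compose a surjective strict map with the inclusion of a subset. -/
def emb (P : Type*) [PartialOrder P] (n : ℕ) (S : Finset (Fin n))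
    (φ : {φ : P → Fin S.card // (∀ p q : P, p < q → φ p < φ q) ∧ Function.Surjective φ}) :
    {φ : P → Fin n // ∀ p q : P, p < q → φ p < φ q} :=
  ⟨fun x => S.orderEmbOfFin rfl (φ.1 x), fun p q h => by simpa using φ.2.1 p q h⟩

theorem range_emb (P : Type*) [PartialOrder P] (n : ℕ) (S : Finset (Fin n))
    (φ : {φ : P → Fin S.card // (∀ p q : P, p < q → φ p < φ q) ∧ Function.Surjective φ}) :
    Set.range (emb P n S φ).1 = S := by
  have : (emb P n S φ).1 = (S.orderEmbOfFin rfl) ∘ φ.1 := rfl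
  rw [this, φ.2.2.range_comp, Finset.range_orderEmbOfFin]

/-- The decomposition map. -/
def decomp (P G : Type*) [PartialOrder P] [Group G] [MulAction G P] (n : ℕ) :
    (Σ S : Finset (Fin n), Quot (surjRel P G S.card)) → Quot (homRel P G n) :=
  fun a => Quot.map (emb P n a.1) (by
    rintro φ ψ ⟨g, hg⟩
    exact ⟨g, fun x => by simp [emb, hg]⟩) a.2

theorem decomp_bijective (P G : Type*) [PartialOrder P] [Fintype P] [Group G] [MulAction G P]
    (n : ℕ) : Function.Bijective (decomp P G n) := by
  classical
  constructor
  · rintro ⟨S, a⟩ ⟨T, b⟩ h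
    induction a using Quot.ind with | mk φ => ?_
    induction b using Quot.ind with | mk ψ => ?_
    have h1 : homRel P G n (emb P n S φ) (emb P n T ψ) :=
      (homRel_equivalence P G n).eqvGen_iff.1 (Quot.eqvGen_exact h)
    obtain ⟨g, hg⟩ := h1
    have hST : S = T := by
      apply Finset.coe_injective
      rw [← range_emb P n S φ, ← range_emb P n T ψ]
      ext y
      constructor
      · rintro ⟨x, rfl⟩
        exact ⟨g • x, by rw [hg]; simp⟩
      · rintro ⟨x, rfl⟩
        exact ⟨g⁻¹ • x, by rw [hg]⟩
    subst hST
    congr 1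
    apply Quot.sound
    refine ⟨g, fun x => ?_⟩
    have := hg x
    exact (S.orderEmbOfFin rfl).injective this
  · intro a
    induction a using Quot.ind with | mk φ => ?_
    let S : Finset (Fin n) := Finset.univ.image φ.1
    have hS : ∀ x, φ.1 x ∈ S := fun x => Finset.mem_image_of_mem _ (Finset.mem_univ x)
    let e := S.orderIsoOfFin rfl
    refine ⟨⟨S, Quot.mk _ ⟨fun x => e.symm ⟨φ.1 x, hS x⟩, ?_, ?_⟩⟩, ?_⟩
    · intro p q h
      apply e.symm.strictMono
      exact φ.2 p q h
    · intro k
      obtain ⟨x, -, hx⟩ := Finset.mem_image.1 (e k).2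
      refine ⟨x, ?_⟩
      rw [OrderIso.symm_apply_eq]
      exact Subtype.ext hx
    · change Quot.mk _ _ = Quot.mk _ _
      congr 1
      apply Subtype.ext
      funext x
      change S.orderEmbOfFin rfl (e.symm ⟨φ.1 x, hS x⟩) = φ.1 x
      rw [← Finset.coe_orderIsoOfFin_apply]
      change ((e (e.symm ⟨φ.1 x, hS x⟩) : S) : Fin n) = _
      rw [OrderIso.apply_symm_apply]

theorem card_surj_zero (P G : Type*) [PartialOrder P] [Fintype P] [Group G] [MulAction G P]
    (k : ℕ) (hk : Fintype.card P < k) : Nat.card (Quot (surjRel P G k)) = 0 := by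
  have : IsEmpty (Quot (surjRel P G k)) := by
    constructor
    intro a
    induction a using Quot.ind with | mk φ => ?_
    have := Fintype.card_le_of_surjective _ φ.2.2
    simp at this
    omega
  exact Nat.card_of_isEmpty

theorem card_surj_top (P G : Type*) [PartialOrder P] [Fintype P] [Group G] [MulAction G P] :
    Nat.card (Quot (surjRel P G (Fintype.card P))) ≠ 0 := by
  classical
  letI : Fintype (LinearExtension P) := inferInstanceAs (Fintype P)
  let e : Fin (Fintype.card P) ≃o LinearExtension P := Fintype.orderIsoFinOfCardEq _ rfl
  have hinj : Function.Injective (toLinearExtension : P →o LinearExtension P) := fun _ _ h => h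
  have hsurj : Function.Surjective (toLinearExtension : P →o LinearExtension P) :=
    fun y => ⟨y, rfl⟩
  have hs : StrictMono (toLinearExtension : P →o LinearExtension P) :=
    toLinearExtension.monotone.strictMono_of_injective hinj
  have : Nonempty (Quot (surjRel P G (Fintype.card P))) :=
    ⟨Quot.mk _ ⟨fun x => e.symm (toLinearExtension x),
      fun p q h => e.symm.strictMono (hs h), e.symm.surjective.comp hsurj⟩⟩
  exact Nat.card_pos.ne'

theorem card_hom (P G : Type*) [PartialOrder P] [Fintype P] [Group G] [MulAction G P] (n : ℕ) :
    Nat.card (Quot (homRel P G n)) =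
      ∑ k ∈ Finset.range (Fintype.card P + 1), n.choose k * Nat.card (Quot (surjRel P G k)) := by
  classical
  rw [← Nat.card_congr (Equiv.ofBijective _ (decomp_bijective P G n)), Nat.card_sigma,
    ← Finset.powerset_univ,
    Finset.sum_powerset_apply_card (fun k => Nat.card (Quot (surjRel P G k)))]
  simp only [Finset.card_univ, Fintype.card_fin, smul_eq_mul]
  rw [Finset.sum_subset (Finset.range_mono (le_max_left (n + 1) (Fintype.card P + 1))),
    Finset.sum_subset (Finset.range_mono (le_max_right (n + 1) (Fintype.card P + 1)))]
  · intro k _ hk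
    rw [card_surj_zero P G k (by rw [Finset.mem_range] at hk; omega), mul_zero]
  · intro k _ hk
    rw [Nat.choose_eq_zero_of_lt (by rw [Finset.mem_range] at hk; omega), zero_mul]

/-- Let `P` be a finite poset and `G` a finite group acting on `P` by
automorphisms.  There exists a polynomial `p` with rational coefficients of degree
exactly `|P|` such that for all integers `n ≥ 1`, `p(n)` equals the number of
`G`-orbits of strictly order preserving maps `P → [n]`
(the action being `(g • φ)(x) = φ(g⁻¹ • x)`). -/
theorem stmt_6 {P G : Type*} [PartialOrder P] [Fintype P] [Group G] [Fintype G]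
    [MulAction G P] (hact : ∀ (g : G) (p q : P), p < q → g • p < g • q) :
    ∃ p : Polynomial ℚ, p.degree = (Fintype.card P : WithBot ℕ) ∧
      ∀ n : ℕ, 1 ≤ n →
        p.eval (n : ℚ) =
          Nat.card (Quot (fun φ ψ : {φ : P → Fin n // ∀ p q : P, p < q → φ p < φ q} =>
            ∃ g : G, ∀ x : P, ψ.1 x = φ.1 (g⁻¹ • x))) := by
  let c : ℕ → ℚ := fun k => (Nat.card (Quot (surjRel P G k)) : ℚ) / (k.factorial : ℚ)
  have hdeg : ∀ k, (descPochhammer ℚ k).degree = k := fun k => by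
    rw [Polynomial.degree_eq_natDegree (monic_descPochhammer ℚ k).ne_zero,
      descPochhammer_natDegree]
  refine ⟨∑ k ∈ Finset.range (Fintype.card P + 1), Polynomial.C (c k) * descPochhammer ℚ k,
    ?_, ?_⟩
  · have hc : c (Fintype.card P) ≠ 0 :=
      div_ne_zero (Nat.cast_ne_zero.2 (card_surj_top P G))
        (Nat.cast_ne_zero.2 (Nat.factorial_ne_zero _))
    have htop : (Polynomial.C (c (Fintype.card P)) * descPochhammer ℚ (Fintype.card P)).degree
        = (Fintype.card P : WithBot ℕ) := by
      rw [Polynomial.degree_C_mul hc, hdeg]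
    rw [Finset.sum_range_succ, Polynomial.degree_add_eq_right_of_degree_lt, htop]
    rw [htop, ← Polynomial.mem_degreeLT]
    refine Submodule.sum_mem _ fun k hk => ?_
    rw [← Polynomial.smul_eq_C_mul]
    refine Submodule.smul_mem _ _ ?_
    rw [Polynomial.mem_degreeLT, hdeg]
    exact_mod_cast Finset.mem_range.1 hk
  · intro n _
    change _ = ((Nat.card (Quot (homRel P G n)) : ℕ) : ℚ)
    rw [card_hom, Polynomial.eval_finsetSum]
    push_cast
    refine Finset.sum_congr rfl fun k _ => ?_
    rw [Polynomial.eval_mul, Polynomial.eval_C, descPochhammer_eval_eq_descFactorial,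
      Nat.descFactorial_eq_factorial_mul_choose]
    have := Nat.cast_ne_zero (R := ℚ).2 (Nat.factorial_ne_zero k)
    simp only [c]
    push_cast
    field_simp
end

section
/- (Pólya's enumeration theorem) Let G be a finite group acting on a finite set X, and let Y be a finite set with n = |Y| elements. Then the number of G-orbits of the induced action of G on the set Y^X of all maps f : X → Y satisfies |Y^X/G| = (1/|G|) · Σ_{g∈G} n^{c(g)}, where c(g) is the number of cycles of g as a permutation of X (i.e., the number of ⟨g⟩-orbits of X). -/
/-- Maps fixed by `g` are the maps on the quotient by the orbits of `⟨g⟩`. -/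
def polyaFixedEquiv {G X Y : Type*} [Group G] [MulAction G X] (g : G) :
    {f : X → Y // ∀ x, f (g⁻¹ • x) = f x} ≃
      (Quotient (MulAction.orbitRel (Subgroup.zpowers g) X) → Y) where
  toFun f := Quotient.lift f.1 (by
    rintro a b ⟨⟨k, hk⟩, rfl⟩
    obtain ⟨f, hf⟩ := f
    have h1 : ∀ x, f (g • x) = f x := fun x => by
      have := hf (g • x)
      rw [inv_smul_smul] at this
      exact this.symm
    obtain ⟨n, rfl⟩ := Subgroup.mem_zpowers_iff.mp hk
    change f (g ^ n • b) = f b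
    clear hk
    induction n with
    | zero => simp
    | succ n ih => rw [add_comm, zpow_add, zpow_one, mul_smul, h1, ih]
    | pred n ih => rw [sub_eq_neg_add, zpow_add, zpow_neg_one, mul_smul, hf, ih])
  invFun F := ⟨fun x => F (Quotient.mk _ x), fun x => congrArg F (Quotient.sound
    ⟨⟨g⁻¹, inv_mem (Subgroup.mem_zpowers g)⟩, rfl⟩)⟩
  left_inv f := rfl
  right_inv F := by
    funext q
    induction q using Quotient.inductionOn with
    | h x => rfl

/-- Pólya's enumeration theorem. Let `G` be a finite group acting on a
finite set `X`, and let `Y` be a finite set with `n = |Y|` elements.  Then the number of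
`G`-orbits of the induced action `(g • f)(x) = f(g⁻¹ • x)` on the set `Y^X` of all maps
`f : X → Y` satisfies `|Y^X/G| = (1/|G|) · Σ_{g ∈ G} n^{c(g)}`, where `c(g)` is the number
of `⟨g⟩`-orbits of `X`. -/
theorem stmt_7 {G X Y : Type*} [Group G] [Fintype G] [Fintype X] [Fintype Y]
    [MulAction G X] :
    (Nat.card (Quot (fun f h : X → Y => ∃ g : G, ∀ x : X, h x = f (g⁻¹ • x))) : ℚ) =
      (Fintype.card G : ℚ)⁻¹ * ∑ g : G,
        (Fintype.card Y : ℚ) ^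
          Nat.card (Quotient (MulAction.orbitRel (Subgroup.zpowers g) X)) := by
  classical
  letI : MulAction G (X → Y) := arrowAction
  have hq : Nat.card (Quot (fun f h : X → Y => ∃ g : G, ∀ x : X, h x = f (g⁻¹ • x))) =
      Nat.card (Quotient (MulAction.orbitRel G (X → Y))) := by
    refine Nat.card_congr (Quot.congrRight fun f h => ?_)
    refine Iff.trans ?_ (MulAction.orbitRel G (X → Y)).comm'
    constructor
    · rintro ⟨g, hg⟩
      exact ⟨g, (funext hg).symm⟩
    · rintro ⟨g, hg⟩
      exact ⟨g, fun x => (congrFun hg x).symm⟩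
  have hf : ∀ g : G, Fintype.card (MulAction.fixedBy (X → Y) g) =
      Fintype.card Y ^ Nat.card (Quotient (MulAction.orbitRel (Subgroup.zpowers g) X)) := by
    intro g
    rw [← Nat.card_eq_fintype_card, ← Nat.card_eq_fintype_card, ← Nat.card_fun]
    refine Nat.card_congr (Equiv.trans (Equiv.subtypeEquivRight fun f => ?_) (polyaFixedEquiv g))
    exact funext_iff
  have hb := MulAction.sum_card_fixedBy_eq_card_orbits_mul_card_group G (X → Y)
  simp only [hf] at hb
  rw [← Nat.card_eq_fintype_card (α := Quotient _), ← hq] at hb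
  have hG : (Fintype.card G : ℚ) ≠ 0 := Nat.cast_ne_zero.mpr Fintype.card_ne_zero
  rw [eq_inv_mul_iff_mul_eq₀ hG, mul_comm]
  exact_mod_cast hb.symm
end

section
/- Let P be a finite poset and G a finite group acting on P by automorphisms, and let p be the polynomial with p(n) = |Hom(P,[n])/G| for all integers n ≥ 1. Then for all integers n ≥ 1, p(-n) = (-1)^{|P|} · |Hom°_+(P,[n])/G|, the number of G-orbits of even strictly order preserving maps P → [n], up to sign. -/
namespace OrdRecip
open Finset Polynomial

lemma exists_antidiff (u : ℚ[X]) :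
    ∃ F : ℚ[X], F.eval 0 = 0 ∧ ∀ x : ℚ, F.eval (x + 1) - F.eval x = u.eval x := by
  induction u using Polynomial.induction_on' with
  | add p q hp hq =>
    obtain ⟨F, hF0, hF⟩ := hp
    obtain ⟨H, hH0, hH⟩ := hq
    refine ⟨F + H, by simp [hF0, hH0], fun x => ?_⟩
    simp only [eval_add, ← hF, ← hH]; ring
  | monomial n a =>
    have hn : ((n : ℚ) + 1) ≠ 0 := by positivity
    refine ⟨C (a / (n + 1)) * (Polynomial.bernoulli (n + 1)
      - C ((Polynomial.bernoulli (n + 1)).eval 0)), by simp, fun x => ?_⟩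
    have := Polynomial.bernoulli_eval_one_add (n + 1) x
    simp only [eval_mul, eval_sub, eval_C, eval_monomial]
    rw [add_comm x 1, this]
    push_cast
    field_simp
    ring_nf
    try simp

open Classical in
/-- Maps `φ : Q → ℕ` with values in `[1,n]` on `S`, value `n` off `S`, satisfying `ρ` along `r`. -/
noncomputable def HomS {Q : Type*} [Fintype Q] (r : Q → Q → Prop) (ρ : ℕ → ℕ → Prop)
    (S : Finset Q) (n : ℕ) : Finset (Q → ℕ) :=
  (Fintype.piFinset (fun x => if x ∈ S then Icc 1 n else {n})).filter
    (fun φ => ∀ x ∈ S, ∀ y ∈ S, r x y → ρ (φ x) (φ y))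

lemma mem_HomS {Q : Type*} [Fintype Q] {r : Q → Q → Prop} {ρ : ℕ → ℕ → Prop}
    {S : Finset Q} {n : ℕ} {φ : Q → ℕ} : φ ∈ HomS r ρ S n ↔
      (∀ x ∈ S, 1 ≤ φ x ∧ φ x ≤ n) ∧ (∀ x, x ∉ S → φ x = n) ∧
      ∀ x ∈ S, ∀ y ∈ S, r x y → ρ (φ x) (φ y) := by
  classical
  simp only [HomS, mem_filter, Fintype.mem_piFinset]
  constructor
  · rintro ⟨h1, h2⟩
    refine ⟨fun x hx => ?_, fun x hx => ?_, h2⟩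
    · simpa [hx] using h1 x
    · simpa [hx] using h1 x
  · rintro ⟨h1, h2, h3⟩
    refine ⟨fun x => ?_, h3⟩
    by_cases hx : x ∈ S
    · simpa [hx] using h1 x hx
    · simpa [hx] using h2 x hx

open Classical in
lemma card_below {Q : Type*} [Fintype Q] (r : Q → Q → Prop) (ρ : ℕ → ℕ → Prop)
    (S : Finset Q) (m : ℕ) :
    ((HomS r ρ S (m + 1)).filter (fun φ => ∀ x ∈ S, φ x ≠ m + 1)).card = (HomS r ρ S m).card := by
  refine Finset.card_bij' (fun φ _ => fun x => if x ∈ S then φ x else m)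
    (fun φ _ => fun x => if x ∈ S then φ x else m + 1) ?_ ?_ ?_ ?_
  · intro φ h
    rw [mem_filter, mem_HomS] at h
    obtain ⟨⟨h1, h2, h3⟩, h4⟩ := h
    rw [mem_HomS]
    refine ⟨fun x hx => ?_, fun x hx => by simp [hx], fun x hx y hy hr => ?_⟩
    · have := h1 x hx; have := h4 x hx
      simp only [hx, if_true]; omega
    · simpa [hx, hy] using h3 x hx y hy hr
  · intro φ h
    rw [mem_HomS] at h
    obtain ⟨h1, h2, h3⟩ := h
    rw [mem_filter, mem_HomS]
    refine ⟨⟨fun x hx => ?_, fun x hx => by simp [hx], fun x hx y hy hr => ?_⟩, fun x hx => ?_⟩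
    · have := h1 x hx
      simp only [hx, if_true]; omega
    · simpa [hx, hy] using h3 x hx y hy hr
    · have := h1 x hx
      simp only [hx, if_true]; omega
  · intro φ h
    rw [mem_filter, mem_HomS] at h
    obtain ⟨⟨h1, h2, h3⟩, h4⟩ := h
    funext x
    by_cases hx : x ∈ S
    · simp [hx]
    · simp [hx, h2 x hx]
  · intro φ h
    rw [mem_HomS] at h
    obtain ⟨h1, h2, h3⟩ := h
    funext x
    by_cases hx : x ∈ S
    · simp [hx]
    · simp [hx, h2 x hx]

open Classical in
/-- maximal elements of `S` -/
noncomputable def maxS {Q : Type*} (r : Q → Q → Prop) (S : Finset Q) : Finset Q :=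
  S.filter (fun x => ∀ y ∈ S, ¬ r x y)

lemma mem_maxS {Q : Type*} {r : Q → Q → Prop} {S : Finset Q} {x : Q} :
    x ∈ maxS r S ↔ x ∈ S ∧ ∀ y ∈ S, ¬ r x y := by
  classical
  simp [maxS]

open Classical in
lemma strict_rec {Q : Type*} [Fintype Q] (r : Q → Q → Prop) (S : Finset Q) (m : ℕ) :
    (HomS r (· < ·) S (m + 1)).card =
      ∑ A ∈ (maxS r S).powerset, (HomS r (· < ·) (S \ A) m).card := by
  rw [Finset.card_eq_sum_card_fiberwise (f := fun φ => S.filter (fun x => φ x = m + 1))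
    (t := (maxS r S).powerset)]
  · refine Finset.sum_congr rfl fun A hA => ?_
    rw [mem_powerset] at hA
    rw [← card_below]
    congr 1
    ext φ
    simp only [mem_filter, mem_HomS]
    constructor
    · rintro ⟨⟨h1, h2, h3⟩, rfl⟩
      refine ⟨⟨fun x hx => h1 x (mem_sdiff.1 hx).1, fun x hx => ?_, fun x hx y hy =>
        h3 x (mem_sdiff.1 hx).1 y (mem_sdiff.1 hy).1⟩, fun x hx => ?_⟩
      · by_cases hS : x ∈ S
        · simpa [hS] using hx
        · exact h2 x hS
      · simp only [mem_sdiff, mem_filter] at hx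
        tauto
    · rintro ⟨⟨h1, h2, h3⟩, h4⟩
      have hAt : ∀ x ∈ A, φ x = m + 1 := fun x hx => h2 x (by simp [hx])
      refine ⟨⟨fun x hx => ?_, fun x hx => h2 x (by simp [hx]), fun x hx y hy hr => ?_⟩, ?_⟩
      · by_cases hxA : x ∈ A
        · simp [hAt x hxA]
        · exact h1 x (by simp [hx, hxA])
      · by_cases hxA : x ∈ A
        · exact absurd hr ((mem_maxS.1 (hA hxA)).2 y hy)
        · have hx' : x ∈ S \ A := by simp [hx, hxA]
          by_cases hyA : y ∈ A
          · have := h1 x hx'; have := h4 x hx'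
            rw [hAt y hyA]; omega
          · exact h3 x hx' y (by simp [hy, hyA]) hr
      · ext x
        simp only [mem_filter]
        constructor
        · rintro ⟨hx, hx'⟩
          by_contra hxA
          exact h4 x (by simp [hx, hxA]) hx'
        · intro hx
          exact ⟨(mem_maxS.1 (hA hx)).1, hAt x hx⟩
  · intro φ hφ
    obtain ⟨h1, h2, h3⟩ := mem_HomS.1 hφ
    simp only [coe_powerset, Set.mem_preimage, Set.mem_powerset_iff, coe_subset]
    intro x hx
    rw [mem_filter] at hx
    refine mem_maxS.2 ⟨hx.1, fun y hy hr => ?_⟩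
    have := h3 x hx.1 y hy hr
    have := h1 y hy
    omega

open Classical in
lemma weak_rec {Q : Type*} [Fintype Q] (r : Q → Q → Prop) (wf : WellFounded (flip r))
    (S : Finset Q) (m : ℕ) :
    ((HomS r (· ≤ ·) S m).card : ℚ) =
      ∑ A ∈ (maxS r S).powerset, (-1) ^ A.card * ((HomS r (· ≤ ·) (S \ A) (m + 1)).card : ℚ) := by
  have hA : ∀ A ∈ (maxS r S).powerset, HomS r (· ≤ ·) (S \ A) (m + 1) =
      (HomS r (· ≤ ·) S (m + 1)).filter (fun φ => ∀ x ∈ A, φ x = m + 1) := by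
    intro A hA
    rw [mem_powerset] at hA
    ext φ
    simp only [mem_filter, mem_HomS]
    constructor
    · rintro ⟨h1, h2, h3⟩
      have hAt : ∀ x ∈ A, φ x = m + 1 := fun x hx => h2 x (by simp [hx])
      refine ⟨⟨fun x hx => ?_, fun x hx => h2 x (by simp [hx]), fun x hx y hy hr => ?_⟩, hAt⟩
      · by_cases hxA : x ∈ A
        · simp [hAt x hxA]
        · exact h1 x (by simp [hx, hxA])
      · by_cases hxA : x ∈ A
        · exact absurd hr ((mem_maxS.1 (hA hxA)).2 y hy)
        · have hx' : x ∈ S \ A := by simp [hx, hxA]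
          by_cases hyA : y ∈ A
          · have := h1 x hx'
            rw [hAt y hyA]; omega
          · exact h3 x hx' y (by simp [hy, hyA]) hr
    · rintro ⟨⟨h1, h2, h3⟩, h4⟩
      refine ⟨fun x hx => h1 x (mem_sdiff.1 hx).1, fun x hx => ?_, fun x hx y hy =>
        h3 x (mem_sdiff.1 hx).1 y (mem_sdiff.1 hy).1⟩
      by_cases hS : x ∈ S
      · exact h4 x (by simpa [hS] using hx)
      · exact h2 x hS
  have step : ∀ A ∈ (maxS r S).powerset,
      (-1 : ℚ) ^ A.card * ((HomS r (· ≤ ·) (S \ A) (m + 1)).card : ℚ) =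
      ∑ φ ∈ HomS r (· ≤ ·) S (m + 1), if ∀ x ∈ A, φ x = m + 1 then (-1 : ℚ) ^ A.card else 0 := by
    intro A h
    rw [hA A h, ← Finset.sum_filter, Finset.sum_const, nsmul_eq_mul, mul_comm]
  rw [Finset.sum_congr rfl step, Finset.sum_comm, ← card_below, Finset.card_filter]
  push_cast
  refine Finset.sum_congr rfl fun φ hφ => ?_
  obtain ⟨h1, h2, h3⟩ := mem_HomS.1 hφ
  rw [← Finset.sum_filter]
  have e : (maxS r S).powerset.filter (fun A => ∀ x ∈ A, φ x = m + 1) =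
      ((maxS r S).filter (fun x => φ x = m + 1)).powerset := by
    ext A
    simp only [mem_filter, mem_powerset, subset_iff]
    exact ⟨fun h x hx => ⟨h.1 hx, h.2 x hx⟩, fun h => ⟨fun x hx => (h hx).1, fun x hx => (h hx).2⟩⟩
  rw [e]
  have := Finset.sum_powerset_neg_one_pow_card (x := (maxS r S).filter (fun x => φ x = m + 1))
  have h' : (∑ A ∈ ((maxS r S).filter (fun x => φ x = m + 1)).powerset, (-1 : ℚ) ^ A.card) =
      if (maxS r S).filter (fun x => φ x = m + 1) = ∅ then 1 else 0 := by
    exact_mod_cast congrArg (Int.cast : ℤ → ℚ) this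
  rw [h']
  refine if_congr ?_ rfl rfl
  rw [Finset.filter_eq_empty_iff]
  constructor
  · intro h x hx
    exact h x (mem_maxS.1 hx).1
  · intro h x
    induction x using wf.induction with
    | _ x ih =>
      intro hx hxt
      refine h (mem_maxS.2 ⟨hx, fun y hy hr => ?_⟩) hxt
      refine ih y hr hy ?_
      have := h3 x hx y hy hr
      have := h1 y hy
      omega

open Classical in
lemma recip {Q : Type*} [Fintype Q] (r : Q → Q → Prop) (wf : WellFounded (flip r))
    (S : Finset Q) : ∃ f : ℚ[X], (∀ n : ℕ, f.eval (n : ℚ) = (HomS r (· ≤ ·) S n).card) ∧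
      ∀ n : ℕ, f.eval (-(n : ℚ)) = (-1) ^ S.card * ((HomS r (· < ·) S n).card : ℚ) := by
  induction S using Finset.strongInduction with
  | H S ih =>
  choose! f hf hf' using ih
  have zero : ∀ ρ : ℕ → ℕ → Prop, ((HomS r ρ S 0).card : ℚ) = if S = ∅ then 1 else 0 := by
    intro ρ
    split_ifs with h
    · subst h
      have : HomS r ρ ∅ 0 = {fun _ => 0} := by
        ext φ; simp [mem_HomS, funext_iff]
      simp [this]
    · have : HomS r ρ S 0 = ∅ := by
        ext φ
        obtain ⟨x, hx⟩ := Finset.nonempty_iff_ne_empty.2 h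
        simp only [mem_HomS, notMem_empty, iff_false]
        rintro ⟨h1, -⟩
        have := h1 x hx
        omega
      simp [this]
  have hss : ∀ A ∈ (maxS r S).powerset.erase ∅, S \ A ⊂ S ∧ A ⊆ S := by
    intro A hA
    rw [mem_erase, mem_powerset] at hA
    have hAS : A ⊆ S := fun x hx => (mem_maxS.1 (hA.2 hx)).1
    exact ⟨Finset.sdiff_ssubset hAS (Finset.nonempty_iff_ne_empty.2 hA.1), hAS⟩
  obtain ⟨F, hF0, hF⟩ := exists_antidiff
    (-(∑ A ∈ (maxS r S).powerset.erase ∅, C ((-1 : ℚ) ^ A.card) * f (S \ A)).comp (X + 1))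
  have key : ∀ x : ℚ, F.eval (x + 1) - F.eval x =
      -∑ A ∈ (maxS r S).powerset.erase ∅, (-1 : ℚ) ^ A.card * (f (S \ A)).eval (x + 1) := by
    intro x
    rw [hF]
    simp [eval_finsetSum]
  have hmem : ∅ ∈ (maxS r S).powerset := by simp
  refine ⟨F + C (if S = ∅ then 1 else 0), fun n => ?_, fun n => ?_⟩
  · induction n with
    | zero => simp only [CharP.cast_eq_zero, eval_add, hF0, eval_C, zero, zero_add]
    | succ n ihn =>
      have k := key n
      have w := weak_rec r wf S n
      rw [← Finset.add_sum_erase _ _ hmem] at w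
      have e : ∑ A ∈ (maxS r S).powerset.erase ∅, (-1 : ℚ) ^ A.card * (f (S \ A)).eval ((n:ℚ) + 1)
          = ∑ A ∈ (maxS r S).powerset.erase ∅,
            (-1) ^ A.card * ((HomS r (· ≤ ·) (S \ A) (n + 1)).card : ℚ) := by
        refine Finset.sum_congr rfl fun A hA => ?_
        rw [← hf _ (hss A hA).1]; push_cast; rfl
      rw [e] at k
      simp only [sdiff_empty, card_empty, pow_zero, one_mul] at w
      simp only [eval_add, eval_C] at ihn ⊢
      push_cast
      linarith
  · induction n with
    | zero =>
      simp only [CharP.cast_eq_zero, neg_zero, eval_add, hF0, eval_C, zero]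
      split_ifs with h <;> simp [h]
    | succ n ihn =>
      have k := key (-(n + 1 : ℚ))
      have w := congrArg (Nat.cast : ℕ → ℚ) (strict_rec r S n)
      rw [← Finset.add_sum_erase _ _ hmem] at w
      push_cast at w
      have hx : (-((n:ℚ) + 1) + 1) = -n := by ring
      rw [hx] at k
      have e : ∑ A ∈ (maxS r S).powerset.erase ∅, (-1 : ℚ) ^ A.card * (f (S \ A)).eval (-(n:ℚ))
          = (-1) ^ S.card * ∑ A ∈ (maxS r S).powerset.erase ∅,
            ((HomS r (· < ·) (S \ A) n).card : ℚ) := by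
        rw [Finset.mul_sum]
        refine Finset.sum_congr rfl fun A hA => ?_
        rw [hf' _ (hss A hA).1, ← mul_assoc, ← pow_add, add_comm,
          Finset.card_sdiff_add_card_eq_card (hss A hA).2]
      rw [e] at k
      simp only [sdiff_empty] at w
      simp only [eval_add, eval_C] at ihn ⊢
      push_cast
      rw [w, mul_add, ← ihn]
      linarith

lemma sign_eq {P : Type*} [Fintype P] [DecidableEq P] (σ : Equiv.Perm P) (Q : Type*) [Fintype Q]
    (π : P → Q) (hπ : Function.Surjective π) (h : ∀ x y, π x = π y ↔ σ.SameCycle x y) :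
    ((Equiv.Perm.sign σ : ℤ) : ℚ) = (-1) ^ (Fintype.card P) * (-1) ^ (Fintype.card Q) := by
  classical
  let F : P → Equiv.Perm P ⊕ P := fun x => if σ x = x then Sum.inr x else Sum.inl (σ.cycleOf x)
  have hF : ∀ x y, F x = F y ↔ σ.SameCycle x y := by
    intro x y
    by_cases hx : σ x = x <;> by_cases hy : σ y = y
    · simp only [F, hx, hy, if_true, Sum.inr.injEq]
      constructor
      · rintro rfl; exact Equiv.Perm.SameCycle.refl _ _
      · intro h; exact (Equiv.Perm.SameCycle.eq_of_left h hx)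
    · simp only [F, hx, hy, if_true, if_false, reduceCtorEq, false_iff]
      intro h
      exact hy (h.apply_eq_self_iff.1 hx)
    · simp only [F, hx, hy, if_true, if_false, reduceCtorEq, false_iff]
      intro h
      exact hx (h.apply_eq_self_iff.2 hy)
    · simp only [F, hx, hy, if_false, Sum.inl.injEq]
      rw [Equiv.Perm.sameCycle_iff_cycleOf_eq_of_mem_support] <;> simpa
  have him : (univ : Finset P).image F =
      σ.cycleFactorsFinset.disjSum (univ.filter (fun x => σ x = x)) := by
    ext z
    simp only [mem_image, mem_univ, true_and, mem_disjSum, mem_filter]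
    constructor
    · rintro ⟨x, rfl⟩
      by_cases hx : σ x = x
      · right; exact ⟨x, hx, by simp [F, hx]⟩
      · left; exact ⟨σ.cycleOf x, by rw [Equiv.Perm.cycleOf_mem_cycleFactorsFinset_iff]; simpa using hx, by simp [F, hx]⟩
    · rintro (⟨c, hc, rfl⟩ | ⟨x, hx, rfl⟩)
      · obtain ⟨x, hx⟩ := (Equiv.Perm.mem_cycleFactorsFinset_iff.1 hc).1.nonempty_support
        have hcx := Equiv.Perm.cycle_is_cycleOf hx hc
        refine ⟨x, ?_⟩
        have : σ x ≠ x := by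
          have : σ.cycleOf x ∈ σ.cycleFactorsFinset := hcx ▸ hc
          rw [Equiv.Perm.cycleOf_mem_cycleFactorsFinset_iff] at this
          simpa using this
        simp [F, this, hcx]
      · exact ⟨x, by simp [F, hx]⟩
  have hQ : Fintype.card Q = ((univ : Finset P).image F).card := by
    rw [← Finset.card_univ]
    refine Finset.card_bij (fun q _ => F (Function.surjInv hπ q)) ?_ ?_ ?_
    · intro q _; simp
    · intro q _ q' _ hq
      rw [hF, ← h] at hq
      simpa [Function.surjInv_eq] using hq
    · intro z hz
      obtain ⟨x, -, rfl⟩ := mem_image.1 hz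
      refine ⟨π x, mem_univ _, ?_⟩
      rw [hF, ← h, Function.surjInv_eq hπ]
  have hc : σ.cycleType.card = σ.cycleFactorsFinset.card := by
    simp [Equiv.Perm.cycleType_def]
  have hs : (univ.filter (fun x => σ x = x)).card + σ.support.card = Fintype.card P := by
    rw [← Finset.card_univ, ← Finset.card_filter_add_card_filter_not (s := univ) (fun x => σ x = x)]
    rfl
  rw [Equiv.Perm.sign_of_cycleType, Equiv.Perm.sum_cycleType, hc, hQ, him, card_disjSum, ← hs]
  push_cast
  have : ((-1 : ℚ) ^ (univ.filter (fun x => σ x = x)).card) *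
    ((-1 : ℚ) ^ (univ.filter (fun x => σ x = x)).card) = 1 := by
    rw [← mul_pow]; simp
  simp only [pow_add]
  linear_combination (-(-1 : ℚ) ^ σ.support.card * (-1) ^ σ.cycleFactorsFinset.card) * this


section
variable {P G : Type*} [PartialOrder P] [Fintype P] [DecidableEq P]
    [Group G] [Fintype G] [MulAction G P]

open Classical in
/-- number of maps `φ` with `D φ` fixed by `g` -/
noncomputable def cnt {n : ℕ} (D : (P → Fin n) → Prop) (g : G) : ℕ :=
  (univ.filter (fun φ : P → Fin n => D φ ∧ ∀ x, φ (g⁻¹ • x) = φ x)).card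

open Classical in
lemma fix_recip (hact : ∀ (g : G) (p q : P), p < q → g • p < g • q) (g : G) :
    ∃ f : ℚ[X], (∀ n : ℕ, f.eval (n : ℚ) = (cnt (fun φ : P → Fin n => ∀ p q : P, p < q → φ p ≤ φ q) g : ℚ)) ∧
      ∀ n : ℕ, f.eval (-(n : ℚ)) = (-1) ^ (Fintype.card P) *
        (((Equiv.Perm.sign (MulAction.toPerm g : Equiv.Perm P) : ℤ) : ℚ) *
        (cnt (fun φ : P → Fin n => ∀ p q : P, p < q → φ p < φ q) g : ℚ)) := by
  set σ : Equiv.Perm P := MulAction.toPerm g with hσ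
  have hσx : ∀ x, σ x = g • x := fun x => rfl
  let Q := Quotient (Equiv.Perm.SameCycle.setoid σ)
  let π : P → Q := fun x => Quotient.mk _ x
  have hπ : Function.Surjective π := Quotient.mk_surjective
  have hπe : ∀ x y, π x = π y ↔ σ.SameCycle x y := fun x y => Quotient.eq
  have hinv : ∀ {α : Type} (φ : P → α), (∀ x, φ (g • x) = φ x) →
      ∀ x y, π x = π y → φ x = φ y := by
    intro α φ hφ x y hxy
    rw [hπe] at hxy
    obtain ⟨k, -, -, rfl⟩ := hxy.exists_pow_eq''
    clear hxy
    induction k with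
    | zero => rfl
    | succ k ih => rw [pow_succ', Equiv.Perm.mul_apply, hσx, hφ, ← ih]
  let r : Q → Q → Prop := fun a b => ∃ x y, π x = a ∧ π y = b ∧ x < y
  let h : P → ℕ := fun x => (univ.filter (fun y => y < x)).card
  have hh : ∀ x, h (g • x) = h x := by
    intro x
    symm
    refine Finset.card_bij (fun y _ => g • y) ?_ ?_ ?_
    · intro y hy; simpa using hact g _ _ (by simpa using hy)
    · intro y _ y' _ he; exact MulAction.injective g he
    · intro y hy
      refine ⟨g⁻¹ • y, ?_, by simp⟩
      have := hact g⁻¹ y (g • x) (by simpa using hy)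
      simpa using this
  have hlt : ∀ x y, x < y → h x < h y := by
    intro x y hxy
    refine Finset.card_lt_card ⟨fun z hz => ?_, fun hs => ?_⟩
    · simp only [mem_filter, mem_univ, true_and] at hz ⊢
      exact hz.trans hxy
    · have := hs (show x ∈ _ by simpa using hxy)
      simp at this
  have wf : WellFounded (flip r) := by
    let k : Q → ℕ := fun q => h (Function.surjInv hπ q)
    have hk : ∀ x, k (π x) = h x := fun x => hinv h hh _ _ (Function.surjInv_eq hπ _)
    let R : Q → Q → Prop := fun a b => k b < k a
    have : IsTrans Q R := ⟨fun a b c h1 h2 => lt_trans h2 h1⟩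
    have : Std.Irrefl R := ⟨fun a => lt_irrefl _⟩
    refine Subrelation.wf ?_ (Finite.wellFounded_of_trans_of_irrefl R)
    rintro a b ⟨x, y, rfl, rfl, hxy⟩
    show k _ < k _
    rw [hk, hk]
    exact hlt x y hxy
  have hcount : ∀ (ρ : ℕ → ℕ → Prop), (∀ a b, ρ (a + 1) (b + 1) ↔ ρ a b) → ∀ n : ℕ,
      (HomS r ρ univ n).card = cnt (fun φ : P → Fin n => ∀ p q : P, p < q → ρ (φ p) (φ q)) g := by
    intro ρ hρ n
    unfold cnt
    refine Finset.card_bij (fun ψ hψ x => ⟨ψ (π x) - 1, by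
      have := (mem_HomS.1 hψ).1 (π x) (mem_univ _); omega⟩) ?_ ?_ ?_
    · intro ψ hψ
      obtain ⟨h1, h2, h3⟩ := mem_HomS.1 hψ
      simp only [mem_filter, mem_univ, true_and]
      refine ⟨fun p q hpq => ?_, fun x => ?_⟩
      · rw [← hρ, Nat.sub_add_cancel (h1 _ (mem_univ _)).1, Nat.sub_add_cancel (h1 _ (mem_univ _)).1]
        exact h3 _ (mem_univ _) _ (mem_univ _) ⟨p, q, rfl, rfl, hpq⟩
      · have : π (g⁻¹ • x) = π x := by
          rw [hπe]
          exact ⟨1, by simp [hσx]⟩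
        simp [this]
    · intro ψ hψ ψ' hψ' he
      funext q
      obtain ⟨x, rfl⟩ := hπ q
      have e := congrArg Fin.val (congrFun he x)
      have a1 := (mem_HomS.1 hψ).1 (π x) (mem_univ _)
      have a2 := (mem_HomS.1 hψ').1 (π x) (mem_univ _)
      simp only at e
      omega
    · intro φ hφ
      simp only [mem_filter, mem_univ, true_and] at hφ
      obtain ⟨h1, h2⟩ := hφ
      have hφ' : ∀ x, φ (Function.surjInv hπ (π x)) = φ x := fun x =>
        hinv φ (fun x => by rw [← h2 (g • x), inv_smul_smul]) _ _ (Function.surjInv_eq hπ _)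
      refine ⟨fun q => (φ (Function.surjInv hπ q) : ℕ) + 1, ?_, ?_⟩
      · refine mem_HomS.2 ⟨fun q _ => ⟨by omega, by omega⟩, fun q hq => absurd (mem_univ q) hq, ?_⟩
        rintro _ - _ - ⟨x, y, rfl, rfl, hxy⟩
        rw [hρ, hφ', hφ']
        exact h1 x y hxy
      · funext x
        simp [hφ']
  obtain ⟨f, hf, hf'⟩ := recip r wf univ
  refine ⟨f, fun n => ?_, fun n => ?_⟩
  · rw [hf, hcount (· ≤ ·) (by intros; omega) n]
    simp only [Fin.val_fin_le]
  · rw [hf', hcount (· < ·) (by intros; omega) n, sign_eq σ Q π hπ hπe, card_univ, ← mul_assoc,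
      ← mul_assoc, ← mul_pow]
    simp only [mul_neg, mul_one, neg_neg, one_pow, one_mul, Fin.val_fin_lt]

open Classical in
lemma burnside (n : ℕ) (D : (P → Fin n) → Prop)
    (hD : ∀ (g : G) φ, D φ → D (fun x => φ (g⁻¹ • x))) :
    (Nat.card (Quot (fun φ ψ : {φ : P → Fin n // D φ} =>
      ∃ g : G, ∀ x : P, ψ.1 x = φ.1 (g⁻¹ • x)))) * Fintype.card G =
    ∑ g : G, cnt D g := by
  let _ : MulAction G {φ : P → Fin n // D φ} :=
    { smul := fun g φ => ⟨fun x => φ.1 (g⁻¹ • x), hD g _ φ.2⟩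
      one_smul := fun φ => Subtype.ext (funext fun x => by
        show φ.1 ((1 : G)⁻¹ • x) = φ.1 x
        simp)
      mul_smul := fun a b φ => Subtype.ext (funext fun x => by
        show φ.1 ((a * b)⁻¹ • x) = φ.1 (b⁻¹ • a⁻¹ • x)
        rw [mul_inv_rev, mul_smul]) }
  have hs : ∀ (g : G) (φ : {φ : P → Fin n // D φ}) x, (g • φ).1 x = φ.1 (g⁻¹ • x) :=
    fun _ _ _ => rfl
  have hB := MulAction.sum_card_fixedBy_eq_card_orbits_mul_card_group G {φ : P → Fin n // D φ}
  have e : Nat.card (Quot (fun φ ψ : {φ : P → Fin n // D φ} =>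
      ∃ g : G, ∀ x : P, ψ.1 x = φ.1 (g⁻¹ • x))) =
      Fintype.card (Quotient (MulAction.orbitRel G {φ : P → Fin n // D φ})) := by
    rw [← Nat.card_eq_fintype_card]
    refine Nat.card_congr (Quot.congr (Equiv.refl _) fun φ ψ => ?_)
    simp only [Equiv.refl_apply]
    constructor
    · rintro ⟨g, hg⟩
      refine (MulAction.orbitRel G _).symm ?_
      exact ⟨g, Subtype.ext (funext fun x => (hg x).symm)⟩
    · intro h
      obtain ⟨g, hg⟩ := (MulAction.orbitRel G _).symm h
      exact ⟨g, fun x => by rw [← hs g φ x]; exact congrFun (congrArg Subtype.val hg.symm) x⟩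
  rw [e, ← hB]
  refine Finset.sum_congr rfl fun g _ => ?_
  rw [cnt, ← Fintype.card_subtype]
  refine Fintype.card_congr
    { toFun := fun φ => ⟨φ.1.1, φ.1.2, fun x =>
        congrFun (congrArg Subtype.val (MulAction.mem_fixedBy.1 φ.2)) x⟩
      invFun := fun φ => ⟨⟨φ.1, φ.2.1⟩, MulAction.mem_fixedBy.2 (Subtype.ext (funext φ.2.2))⟩
      left_inv := fun _ => rfl
      right_inv := fun _ => rfl }

open Classical in
lemma even_sum (n : ℕ) (D : (P → Fin n) → Prop) :
    ∑ g : G, (((Equiv.Perm.sign (MulAction.toPerm g : Equiv.Perm P) : ℤ) : ℚ) *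
        (cnt D g : ℚ)) =
    ∑ g : G, (cnt (fun φ : P → Fin n => D φ ∧
          ∀ g : G, (∀ x : P, φ (g⁻¹ • x) = φ x) →
            Equiv.Perm.sign (MulAction.toPerm g : Equiv.Perm P) = 1) g : ℚ) := by
  have e1 : ∀ g : G, (((Equiv.Perm.sign (MulAction.toPerm g : Equiv.Perm P) : ℤ) : ℚ) *
        (cnt D g : ℚ)) =
      ∑ φ : P → Fin n, if D φ ∧ ∀ x, φ (g⁻¹ • x) = φ x then
        ((Equiv.Perm.sign (MulAction.toPerm g : Equiv.Perm P) : ℤ) : ℚ) else 0 := by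
    intro g
    rw [← Finset.sum_filter, Finset.sum_const, nsmul_eq_mul, mul_comm, cnt]
  simp only [e1]
  simp only [cnt, Finset.card_filter]
  push_cast
  rw [Finset.sum_comm]
  conv_rhs => rw [Finset.sum_comm]
  refine Finset.sum_congr rfl fun φ _ => ?_
  by_cases hφ : D φ
  swap
  · simp [hφ]
  by_cases hev : ∀ g : G, (∀ x : P, φ (g⁻¹ • x) = φ x) →
            Equiv.Perm.sign (MulAction.toPerm g : Equiv.Perm P) = 1
  · refine Finset.sum_congr rfl fun g _ => ?_
    by_cases hg : ∀ x : P, φ (g⁻¹ • x) = φ x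
    · rw [if_pos ⟨hφ, hg⟩, if_pos ⟨⟨hφ, hev⟩, hg⟩, hev g hg]; simp
    · rw [if_neg (fun h => hg h.2), if_neg (fun h => hg h.2)]
  · rw [Finset.sum_eq_zero (s := univ) (f := fun g : G => if (D φ ∧ _) ∧ _ then _ else _)
      (fun g _ => if_neg (fun h => hev h.1.2))]
    push Not at hev
    obtain ⟨a, ha, hsa⟩ := hev
    have hsa' : Equiv.Perm.sign (MulAction.toPerm a : Equiv.Perm P) = -1 :=
      (Int.units_eq_one_or _).resolve_left hsa
    have hE : ∀ g : G, (∀ x, φ ((a * g)⁻¹ • x) = φ x) ↔ ∀ x, φ (g⁻¹ • x) = φ x := by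
      intro g
      simp only [mul_inv_rev, mul_smul]
      constructor
      · intro h x
        have := h (a • x)
        rw [inv_smul_smul] at this
        rw [this, ← ha (a • x), inv_smul_smul]
      · intro h x
        rw [h, ha]
    set T := ∑ g : G, if D φ ∧ ∀ x, φ (g⁻¹ • x) = φ x then
        ((Equiv.Perm.sign (MulAction.toPerm g : Equiv.Perm P) : ℤ) : ℚ) else 0 with hT
    have : T = -T := by
      conv_lhs => rw [hT, ← Equiv.sum_comp (Equiv.mulLeft a)]
      rw [hT, ← Finset.sum_neg_distrib]
      refine Finset.sum_congr rfl fun g _ => ?_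
      have hm : (MulAction.toPerm (a * g) : Equiv.Perm P) =
          MulAction.toPerm a * MulAction.toPerm g := by
        ext x; simp [mul_smul]
      simp only [Equiv.coe_mulLeft, hE, hm, Equiv.Perm.sign_mul, hsa']
      split_ifs <;> simp
    linarith
end

end OrdRecip

/-- Let `P` be a finite poset and `G` a finite group acting on `P` by
automorphisms, and let `p` be the polynomial with `p(n) = |Hom(P,[n])/G|` for all
integers `n ≥ 1`.  Then for all integers `n ≥ 1` we have
`p(-n) = (-1)^{|P|} · |Hom°₊(P,[n])/G|`, the number of `G`-orbits of even strictly order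
preserving maps `P → [n]`, up to sign.  (A map `φ` is even if every `g ∈ G` fixing `φ`
has sign `+1` as a permutation of `P`.) -/
theorem stmt_9 {P G : Type*} [PartialOrder P] [Fintype P] [DecidableEq P]
    [Group G] [Fintype G] [MulAction G P]
    (hact : ∀ (g : G) (p q : P), p < q → g • p < g • q)
    (p : Polynomial ℚ)
    (hp : ∀ n : ℕ, 1 ≤ n →
      p.eval (n : ℚ) =
        Nat.card (Quot (fun φ ψ : {φ : P → Fin n // ∀ p q : P, p < q → φ p ≤ φ q} =>
          ∃ g : G, ∀ x : P, ψ.1 x = φ.1 (g⁻¹ • x))))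
    (n : ℕ) (hn : 1 ≤ n) :
    p.eval (-(n : ℚ)) = (-1) ^ (Fintype.card P) *
      Nat.card (Quot (fun φ ψ : {φ : P → Fin n //
          (∀ p q : P, p < q → φ p < φ q) ∧
          ∀ g : G, (∀ x : P, φ (g⁻¹ • x) = φ x) →
            Equiv.Perm.sign (MulAction.toPerm g : Equiv.Perm P) = 1} =>
        ∃ g : G, ∀ x : P, ψ.1 x = φ.1 (g⁻¹ • x))) := by
  classical
  choose f hf hf' using fun g : G => OrdRecip.fix_recip (P := P) hact g
  have hG : (Fintype.card G : ℚ) ≠ 0 := by exact_mod_cast Fintype.card_ne_zero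
  have hpoly : p * Polynomial.C (Fintype.card G : ℚ) = ∑ g : G, f g := by
    refine Polynomial.eq_of_infinite_eval_eq _ _ ?_
    refine Set.Infinite.mono (s := (fun k : ℕ => (k : ℚ)) '' Set.Ici 1) ?_ ?_
    · rintro _ ⟨k, hk, rfl⟩
      have hb := OrdRecip.burnside (P := P) (G := G) k (fun φ => ∀ p q : P, p < q → φ p ≤ φ q)
        (fun g φ h a b hab => h _ _ (hact g⁻¹ a b hab))
      simp only [Set.mem_ofPred_eq, Polynomial.eval_mul, Polynomial.eval_C,
        Polynomial.eval_finsetSum, hf]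
      rw [hp k hk]
      exact_mod_cast hb
    · exact (Set.Ici_infinite 1).image (Nat.cast_injective.injOn)
  have he := congrArg (Polynomial.eval (-(n : ℚ))) hpoly
  simp only [Polynomial.eval_mul, Polynomial.eval_C, Polynomial.eval_finsetSum, hf'] at he
  rw [← Finset.mul_sum, OrdRecip.even_sum n (fun φ : P → Fin n => ∀ p q : P, p < q → φ p < φ q)] at he
  have hb := OrdRecip.burnside (P := P) (G := G) n (fun φ => (∀ p q : P, p < q → φ p < φ q) ∧
          ∀ g : G, (∀ x : P, φ (g⁻¹ • x) = φ x) →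
            Equiv.Perm.sign (MulAction.toPerm g : Equiv.Perm P) = 1)
        (fun g φ h => ⟨fun a b hab => h.1 _ _ (hact g⁻¹ a b hab), fun k hk => by
          have h2 := h.2 (g⁻¹ * k * g) (fun x => by
            have := hk (g • x)
            simpa [mul_smul] using this)
          have hm : (MulAction.toPerm (g⁻¹ * k * g) : Equiv.Perm P) =
              (MulAction.toPerm g)⁻¹ * MulAction.toPerm k * MulAction.toPerm g := by
            ext x; simp [mul_smul, MulAction.toPerm]
          rw [hm, Equiv.Perm.sign_mul, Equiv.Perm.sign_mul, Equiv.Perm.sign_inv, mul_comm,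
            ← mul_assoc, Int.units_mul_self, one_mul] at h2
          exact h2⟩)
  apply mul_right_cancel₀ hG
  rw [he, mul_assoc]
  congr 1
  exact_mod_cast hb.symm
end

section
/- Let P be a finite poset and G a finite group acting on P by automorphisms, and let p be the polynomial with p(n) = |Hom°(P,[n])/G| for all integers n ≥ 1. Then for all integers n ≥ 1, p(-n) = (-1)^{|P|} · |Hom_+(P,[n])/G|, the number of G-orbits of even order preserving maps P → [n], up to sign. -/
section Aux

open Finset

lemma aux_choose_poly (k : ℕ) : ∃ q : Polynomial ℚ, ∀ m : ℚ, q.eval m = Ring.choose m k := by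
  refine ⟨Polynomial.C ((k.factorial : ℚ)⁻¹) * descPochhammer ℚ k, fun m => ?_⟩
  rw [Ring.choose_eq_smul, Polynomial.eval_mul, Polynomial.eval_C, smul_eq_mul,
    ← Polynomial.aeval_eq_smeval, ← descPochhammer_map (Int.castRingHom ℚ),
    Polynomial.eval_map, Polynomial.aeval_def]
  rfl

/-- integer powers of a unipotent matrix have polynomial entries -/
lemma aux_unipotent {L : Type*} [Fintype L] [DecidableEq L] (N V : Matrix L L ℚ) (d : ℕ)
    (hN : N ^ d = 0) (hV : (1 + N) * V = 1) (i j : L) :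
    ∃ q : Polynomial ℚ, ∀ n : ℕ, q.eval (n : ℚ) = ((1 + N) ^ n) i j ∧
      q.eval (-(n : ℚ)) = (V ^ n) i j := by
  set R : ℚ → Matrix L L ℚ := fun m => ∑ k ∈ range d, Ring.choose m k • N ^ k with hR
  have hR0 : R 0 = 1 := by
    rcases d with _ | d
    · simp only [hR, range_zero, sum_empty]
      simpa using hN.symm
    · simp only [hR]
      rw [sum_range_succ', sum_eq_zero]
      · simp
      · intro k _
        rw [Ring.choose_zero_succ, zero_smul]
  have hstep : ∀ m, R (m + 1) = R m * (1 + N) := by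
    intro m
    rcases d with _ | d
    · simp [hR]
    · have h1 : R (m+1) = (∑ k ∈ range d, Ring.choose m k • N ^ (k+1)) + R m := by
        simp only [hR]
        rw [sum_range_succ', sum_range_succ' (fun k => Ring.choose m k • N ^ k)]
        simp only [Ring.choose_succ_succ, add_smul, sum_add_distrib, Ring.choose_zero_right]
        abel
      rw [h1, mul_add, mul_one, add_comm]
      congr 1
      simp only [hR]
      rw [sum_range_succ, add_mul, smul_mul_assoc, ← pow_succ, hN, smul_zero, add_zero, sum_mul]
      exact sum_congr rfl fun k _ => by rw [smul_mul_assoc, ← pow_succ]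
  have hpos : ∀ n : ℕ, R n = (1 + N) ^ n := by
    intro n
    induction n with
    | zero => simpa using hR0
    | succ n ih => rw [Nat.cast_succ, hstep, ih, pow_succ]
  have hneg : ∀ n : ℕ, R (-n) = V ^ n := by
    intro n
    induction n with
    | zero => simpa using hR0
    | succ n ih =>
      have := hstep (-((n+1 : ℕ) : ℚ))
      have e : (-((n+1 : ℕ) : ℚ)) + 1 = -n := by push_cast; ring
      rw [e, ih] at this
      rw [pow_succ, this, mul_assoc, hV, mul_one]
  choose q hq using aux_choose_poly
  refine ⟨∑ k ∈ range d, q k * Polynomial.C ((N ^ k) i j), fun n => ?_⟩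
  have : ∀ m : ℚ, (∑ k ∈ range d, q k * Polynomial.C ((N ^ k) i j)).eval m = R m i j := by
    intro m
    simp [hR, Polynomial.eval_finsetSum, hq, Matrix.sum_apply]
  rw [this, this, hpos, hneg]
  exact ⟨rfl, rfl⟩

variable {Q : Type*} [PartialOrder Q] [Fintype Q]

/-- step relation between consecutive lower sets -/
def AuxR (w : Prop) (I J : LowerSet Q) : Prop :=
  I ≤ J ∧ (w ∨ ∀ x y : Q, x < y → y ∈ J → x ∈ I)

/-- weak or strict maps on `J` with values below `n`, extended by `n` -/
def AuxS (w : Prop) (n : ℕ) (J : LowerSet Q) : Type _ :=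
  {φ : Q → ℕ // (∀ x ∈ J, φ x < n) ∧ (∀ x, x ∉ J → φ x = n) ∧
    ∀ x y : Q, x < y → y ∈ J → (φ x < φ y ∨ (w ∧ φ x = φ y))}

instance (w : Prop) (n : ℕ) (J : LowerSet Q) : Finite (AuxS w n J) := by
  have : Set.Finite {φ : Q → ℕ | ∀ x, φ x ≤ n} := by
    have := Set.Finite.pi' (ι := Q) (t := fun _ : Q => Set.Iic n) (fun _ => Set.finite_Iic n)
    exact this
  refine Set.Finite.subset this ?_
  rintro φ ⟨h1, h2, -⟩ x
  by_cases hx : x ∈ J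
  · exact (h1 x hx).le
  · exact (h2 x hx).le

open Classical in
noncomputable def auxEquiv (w : Prop) (n : ℕ) (J : LowerSet Q) :
    AuxS w (n+1) J ≃ Σ I : {I : LowerSet Q // AuxR w I J}, AuxS w n I.1 where
  toFun φ := ⟨⟨⟨{x | φ.1 x < n}, by
      intro y x hxy hy
      rcases hxy.eq_or_lt with rfl | h
      · exact hy
      · have hyJ : y ∈ J := by
          by_contra h
          have := φ.2.2.1 y h
          simp only [Set.mem_ofPred_eq] at hy
          omega
        have := φ.2.2.2 x y h hyJ
        simp only [Set.mem_ofPred_eq] at hy ⊢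
        omega⟩, by
      constructor
      · intro x hx
        by_contra h
        have := φ.2.2.1 x h
        change φ.1 x < n at hx
        omega
      · by_cases hw : w
        · exact Or.inl hw
        · refine Or.inr fun x y hxy hy => ?_
          have := φ.2.2.2 x y hxy hy
          have h2 := φ.2.1 y hy
          change φ.1 x < n
          simp only [hw, false_and, or_false] at this
          omega⟩, 
      ⟨fun x => min (φ.1 x) n, by
        refine ⟨fun x hx => ?_, fun x hx => ?_, fun x y hxy hy => ?_⟩
        · change φ.1 x < n at hx
          change min (φ.1 x) n < n
          omega
        · change ¬ φ.1 x < n at hx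
          change min (φ.1 x) n = n
          omega
        · change φ.1 y < n at hy
          have hyJ : y ∈ J := by
            by_contra h
            have := φ.2.2.1 y h
            omega
          have := φ.2.2.2 x y hxy hyJ
          by_cases hw : w
          · simp only [hw, true_and] at this ⊢
            omega
          · simp only [hw, false_and, or_false] at this ⊢
            omega⟩⟩
  invFun p := ⟨fun x => p.2.1 x + if x ∈ J then 0 else 1, by
    obtain ⟨⟨I, hIJ, hR⟩, ψ, h1, h2, h3⟩ := p
    dsimp only at *
    refine ⟨fun x hx => ?_, fun x hx => ?_, fun x y hxy hy => ?_⟩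
    · simp only [hx, if_true]
      by_cases hI : x ∈ I
      · have := h1 x hI; omega
      · have := h2 x hI; omega
    · simp only [hx, if_false]
      have := h2 x (fun h => hx (hIJ h))
      omega
    · have hx : x ∈ J := J.lower hxy.le hy
      simp only [hx, hy, if_true]
      by_cases hI : y ∈ I
      · exact h3 x y hxy hI
      · have hy2 := h2 y hI
        by_cases hxI : x ∈ I
        · have := h1 x hxI
          left; omega
        · have hx2 := h2 x hxI
          right
          refine ⟨?_, by omega⟩
          rcases hR with hR | hR
          · exact hR
          · exact absurd (hR x y hxy hy) hxI⟩
  left_inv φ := by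
    apply Subtype.ext
    funext x
    dsimp only
    by_cases hx : x ∈ J
    · have := φ.2.1 x hx
      simp only [hx, if_true]; omega
    · have := φ.2.2.1 x hx
      simp only [hx, if_false]; omega
  right_inv p := by
    obtain ⟨⟨I, hIJ, hR⟩, ψ, h1, h2, h3⟩ := p
    have key : ∀ x, (ψ x + if x ∈ J then 0 else 1) < n ↔ x ∈ I := by
      intro x
      by_cases hI : x ∈ I
      · have := h1 x hI
        have hJ : x ∈ J := hIJ hI
        simp only [hI, hJ, if_true, iff_true]; omega
      · have := h2 x hI
        simp only [hI, iff_false]; omega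
    have key2 : ∀ x, min (ψ x + if x ∈ J then 0 else 1) n = ψ x := by
      intro x
      by_cases hI : x ∈ I
      · have := h1 x hI
        have hJ : x ∈ J := hIJ hI
        simp only [hJ, if_true]; omega
      · have := h2 x hI
        omega
    have hI : (⟨{x | (ψ x + if x ∈ J then 0 else 1) < n}, by
        intro y x hxy hy
        exact (key x).2 (I.lower hxy ((key y).1 hy))⟩ : LowerSet Q) = I := by
      ext x
      exact key x
    have : ∀ (I' : LowerSet Q) (h : I' = I) (a : AuxR w I' J) (ψ' : AuxS w n I'), ψ'.1 = ψ →
        (⟨⟨I', a⟩, ψ'⟩ : Σ I : {I : LowerSet Q // AuxR w I J}, AuxS w n I.1) =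
        ⟨⟨I, hIJ, hR⟩, ψ, h1, h2, h3⟩ := by
      intro I' h a ψ' h'
      subst h
      congr 1
      exact Subtype.ext h'
    exact this _ hI _ _ (funext key2)

open Classical in
noncomputable instance auxFintype : Fintype (LowerSet Q) :=
  haveI : Finite (LowerSet Q) := Finite.of_injective (fun I : LowerSet Q => (I : Set Q))
    SetLike.coe_injective
  Fintype.ofFinite _

open Classical in
noncomputable def auxM (Q : Type*) [PartialOrder Q] (w : Prop) :
    Matrix (LowerSet Q) (LowerSet Q) ℚ :=
  fun I J => if AuxR w I J then 1 else 0

open Classical in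
lemma aux_count (w : Prop) (n : ℕ) (J : LowerSet Q) :
    (Nat.card (AuxS w n J) : ℚ) = ((auxM Q w) ^ n) ⊥ J := by
  induction n generalizing J with
  | zero =>
    rw [pow_zero, Matrix.one_apply]
    split_ifs with h
    · subst h
      have : Unique (AuxS w 0 (⊥ : LowerSet Q)) :=
        { default := ⟨fun _ => 0, by simp⟩
          uniq := fun φ => Subtype.ext (funext fun x => φ.2.2.1 x (by simp)) }
      simp
    · have : IsEmpty (AuxS w 0 J) := ⟨fun φ => h (by
        symm
        rw [eq_bot_iff]
        intro x hx
        exact absurd (φ.2.1 x hx) (by omega))⟩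
      simp
  | succ n ih =>
    rw [Nat.card_congr (auxEquiv w n J), Nat.card_sigma, pow_succ, Matrix.mul_apply]
    push_cast
    simp only [ih, auxM, mul_ite, mul_one, mul_zero]
    rw [← Finset.sum_filter, Finset.sum_subtype (p := fun I => AuxR w I J)]
    simp

lemma aux_card_top {Q : Type*} [PartialOrder Q] (w : Prop) (n : ℕ) : Nat.card (AuxS w n (⊤ : LowerSet Q)) =
    Nat.card {φ : Q → Fin n // ∀ x y, x < y → (φ x < φ y ∨ (w ∧ φ x = φ y))} := by
  apply Nat.card_congr
  exact
  { toFun := fun φ => ⟨fun x => ⟨φ.1 x, φ.2.1 x trivial⟩, fun x y h => by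
      have := φ.2.2.2 x y h trivial
      simpa only [Fin.mk_lt_mk, Fin.mk.injEq] using this⟩
    invFun := fun φ => ⟨fun x => (φ.1 x : ℕ), fun x _ => (φ.1 x).2, fun x hx => absurd trivial hx,
      fun x y h _ => by
        have := φ.2 x y h
        rwa [Fin.lt_def, Fin.ext_iff] at this⟩
    left_inv := fun φ => rfl
    right_inv := fun φ => rfl }

open Classical in
lemma aux_inv : (auxM Q True) * (Matrix.diagonal fun J : LowerSet Q => (-1 : ℚ) ^ (Nat.card J)) *
    (auxM Q False) * (Matrix.diagonal fun J : LowerSet Q => (-1 : ℚ) ^ (Nat.card J)) = 1 := by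
  ext I J
  rw [Matrix.mul_diagonal, Matrix.mul_apply, Matrix.one_apply]
  simp only [Matrix.mul_diagonal]
  split_ifs with hIJ
  · subst hIJ
    rw [Finset.sum_eq_single I]
    · have h1 : AuxR True I I := ⟨le_rfl, Or.inl trivial⟩
      have h2 : AuxR False I I := ⟨le_rfl, Or.inr fun x y h hy => I.lower h.le hy⟩
      simp only [auxM, h1, h2, if_true, one_mul, mul_one]
      rw [← mul_pow]; simp
    · intro K _ hK
      simp only [auxM]
      by_cases h1 : AuxR True I K
      · by_cases h2 : AuxR False K I
        · exact absurd (le_antisymm h2.1 h1.1) hK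
        · simp [h2]
      · simp [h1]
    · simp
  · apply mul_eq_zero_of_left
    by_cases hle : I ≤ J
    swap
    · refine Finset.sum_eq_zero fun K _ => ?_
      simp only [auxM]
      by_cases h1 : AuxR True I K
      · by_cases h2 : AuxR False K J
        · exact absurd (h1.1.trans h2.1) hle
        · simp [h2]
      · simp [h1]
    obtain ⟨x, ⟨hxJ, hxI⟩, hmax⟩ : ∃ x, (x ∈ J ∧ x ∉ I) ∧ ∀ y, x < y → y ∉ J := by
      have hne : ∃ x, x ∈ J ∧ x ∉ I := by
        by_contra! h
        exact hIJ (le_antisymm hle h)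
      obtain ⟨x, hx⟩ := Set.Finite.exists_maximal (Set.toFinite {x | x ∈ J ∧ x ∉ I}) hne
      refine ⟨x, hx.1, fun y hy hyJ => ?_⟩
      have : y ∈ {x | x ∈ J ∧ x ∉ I} := ⟨hyJ, fun hyI => hx.1.2 (I.lower hy.le hyI)⟩
      exact absurd (hx.2 this hy.le) (not_le_of_gt hy)
    have hterm : ∀ K : LowerSet Q, auxM Q True I K * (-1 : ℚ) ^ (Nat.card K) * auxM Q False K J
        = if AuxR True I K ∧ AuxR False K J then (-1 : ℚ) ^ (Nat.card K) else 0 := by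
      intro K
      simp only [auxM]
      by_cases h1 : AuxR True I K <;> by_cases h2 : AuxR False K J <;> simp [h1, h2]
    simp only [hterm]
    rw [← Finset.sum_filter]
    have hlow : ∀ K : LowerSet Q, AuxR False K J → IsLowerSet (symmDiff (K : Set Q) {x}) := by
      intro K hK b a hab hb
      rcases hab.eq_or_lt with rfl | hab
      · exact hb
      have hax : a ≠ x := by
        rintro rfl
        rcases hb with ⟨hb, -⟩ | ⟨hb, -⟩
        · exact hmax b hab (hK.1 hb)
        · rw [Set.mem_singleton_iff] at hb
          exact absurd hab (by rw [hb]; exact lt_irrefl _)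
      refine Or.inl ⟨?_, hax⟩
      rcases hb with ⟨hb, -⟩ | ⟨hb, -⟩
      · exact K.lower hab.le hb
      · rw [Set.mem_singleton_iff] at hb
        subst hb
        rcases hK.2 with h | h
        · exact h.elim
        · exact h a b hab hxJ
    have hcard : ∀ K K' : LowerSet Q, x ∉ K → (K' : Set Q) = insert x (K : Set Q) →
        Nat.card K' = Nat.card K + 1 := by
      intro K K' hx h
      have := Set.ncard_insert_of_notMem (s := (K : Set Q)) (a := x) hx
      rw [← h] at this
      exact this
    refine Finset.sum_involution
      (fun K hK => ⟨symmDiff (K : Set Q) {x}, hlow K (Finset.mem_filter.1 hK).2.2⟩) ?_ ?_ ?_ ?_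
    · intro K hK
      by_cases hx : x ∈ K
      · rw [hcard ⟨symmDiff (K : Set Q) {x}, hlow K (Finset.mem_filter.1 hK).2.2⟩ K]
        · rw [pow_succ]; ring
        · rintro (⟨-, h⟩ | ⟨-, h⟩)
          · exact h rfl
          · exact h hx
        · ext y
          simp only [LowerSet.coe_mk, Set.mem_insert_iff, Set.mem_symmDiff, SetLike.mem_coe,
            Set.mem_singleton_iff]
          by_cases hy : y = x
          · subst hy; simp [hx]
          · simp [hy]
      · rw [hcard K ⟨symmDiff (K : Set Q) {x}, hlow K (Finset.mem_filter.1 hK).2.2⟩ hx]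
        · rw [pow_succ]; ring
        · ext y
          simp only [LowerSet.coe_mk, Set.mem_insert_iff, Set.mem_symmDiff, SetLike.mem_coe,
            Set.mem_singleton_iff]
          by_cases hy : y = x
          · subst hy; simp [hx]
          · simp [hy]
    · intro K hK _ h
      have h' : symmDiff (K : Set Q) {x} = K := congrArg (fun L : LowerSet Q => (L : Set Q)) h
      have : x ∈ symmDiff (K : Set Q) {x} ↔ x ∈ K := by rw [h']; rfl
      simp [Set.mem_symmDiff] at this
    · intro K hK
      obtain ⟨-, h1, h2⟩ := Finset.mem_filter.1 hK
      refine Finset.mem_filter.2 ⟨Finset.mem_univ _, ⟨?_, Or.inl trivial⟩, ?_, Or.inr ?_⟩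
      · intro y hy
        exact Or.inl ⟨h1.1 hy, fun h => hxI (by rw [← Set.mem_singleton_iff.1 h]; exact hy)⟩
      · rintro y (⟨hy, -⟩ | ⟨hy, -⟩)
        · exact h2.1 hy
        · rw [Set.mem_singleton_iff.1 hy]; exact hxJ
      · intro a b hab hb
        rcases h2.2 with h | h
        · exact h.elim
        · exact Or.inl ⟨h a b hab hb, by rintro rfl; exact hmax b hab hb⟩
    · intro K hK
      apply SetLike.coe_injective
      simp

open Classical in
lemma aux_nilp : (auxM Q True - 1) ^ (Fintype.card Q + 1) = 0 := by
  have key : ∀ (k : ℕ) (I J : LowerSet Q), ((auxM Q True - 1) ^ k) I J ≠ 0 →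
      Nat.card I + k ≤ Nat.card J := by
    intro k
    induction k with
    | zero =>
      intro I J h
      rw [pow_zero, Matrix.one_apply] at h
      have : I = J := by by_contra h'; simp [h'] at h
      subst this; simp
    | succ k ih =>
      intro I J h
      rw [pow_succ, Matrix.mul_apply] at h
      obtain ⟨K, -, hK⟩ := Finset.exists_ne_zero_of_sum_ne_zero h
      have h1 := ih I K (left_ne_zero_of_mul hK)
      have h2 := right_ne_zero_of_mul hK
      have hlt : K < J := by
        rw [Matrix.sub_apply, Matrix.one_apply] at h2
        simp only [auxM] at h2
        by_cases hKJ : K = J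
        · subst hKJ
          exact absurd (by simp [AuxR]) h2
        · by_cases hr : AuxR True K J
          · exact lt_of_le_of_ne hr.1 hKJ
          · simp [hKJ, hr] at h2
      have : Nat.card K < Nat.card J :=
        Set.ncard_lt_ncard (s := (K : Set Q)) (t := (J : Set Q))
          (LowerSet.coe_ssubset_coe.2 hlt) (Set.toFinite _)
      omega
  ext I J
  by_contra h
  have h1 := key _ I J h
  have h2 : Nat.card J ≤ Fintype.card Q := by
    rw [← Nat.card_eq_fintype_card]
    exact Set.ncard_le_card (J : Set Q)
  omega

open Classical in
/-- Stanley reciprocity for order polynomials -/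
lemma aux_stanley (Q : Type*) [PartialOrder Q] [Fintype Q] :
    ∃ f : Polynomial ℚ, ∀ n : ℕ,
    f.eval (n : ℚ) = Nat.card {φ : Q → Fin n // ∀ x y, x < y → φ x < φ y} ∧
    f.eval (-(n : ℚ)) = (-1) ^ (Fintype.card Q) *
      Nat.card {φ : Q → Fin n // ∀ x y, x < y → φ x ≤ φ y} := by
  set D : Matrix (LowerSet Q) (LowerSet Q) ℚ :=
    Matrix.diagonal fun J : LowerSet Q => (-1 : ℚ) ^ (Nat.card J) with hD
  have hDD : D * D = 1 := by
    rw [hD, Matrix.diagonal_mul_diagonal, ← Matrix.diagonal_one]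
    congr 1
    funext J
    rw [← mul_pow]; simp
  have h1 : (1 + (auxM Q True - 1)) = auxM Q True := by abel
  have hV : (1 + (auxM Q True - 1)) * (D * auxM Q False * D) = 1 := by
    rw [h1, ← mul_assoc, ← mul_assoc]
    exact aux_inv
  obtain ⟨q, hq⟩ := aux_unipotent _ _ _ aux_nilp hV ⊥ ⊤
  have hVn : ∀ n : ℕ, (D * auxM Q False * D) ^ n = D * (auxM Q False) ^ n * D := by
    intro n
    induction n with
    | zero => simp [hDD]
    | succ n ih =>
      rw [pow_succ, ih, pow_succ]
      calc _ = D * auxM Q False ^ n * (D * D) * auxM Q False * D := by simp only [mul_assoc]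
        _ = _ := by rw [hDD]; simp only [mul_assoc, one_mul]
  have hct : Nat.card (⊤ : LowerSet Q) = Fintype.card Q := by
    rw [← Nat.card_eq_fintype_card]
    exact Set.ncard_univ Q
  have hcb : Nat.card (⊥ : LowerSet Q) = 0 := by
    exact Set.ncard_empty Q
  refine ⟨Polynomial.C ((-1) ^ (Fintype.card Q)) * q.comp (-Polynomial.X), fun n => ⟨?_, ?_⟩⟩
  · have e : Nat.card {φ : Q → Fin n // ∀ x y, x < y → φ x < φ y} =
      Nat.card (AuxS False n (⊤ : LowerSet Q)) := by
      rw [aux_card_top]; simp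
    rw [e, aux_count]
    simp only [Polynomial.eval_mul, Polynomial.eval_C, Polynomial.eval_comp, Polynomial.eval_neg,
      Polynomial.eval_X]
    rw [(hq n).2, hVn, hD, Matrix.mul_diagonal, Matrix.diagonal_mul, hct, hcb, pow_zero, one_mul,
      mul_comm, mul_assoc, ← mul_pow]
    simp
  · have e : Nat.card {φ : Q → Fin n // ∀ x y, x < y → φ x ≤ φ y} =
      Nat.card (AuxS True n (⊤ : LowerSet Q)) := by
      rw [aux_card_top]; simp [le_iff_lt_or_eq]
    rw [e, aux_count]
    simp only [Polynomial.eval_mul, Polynomial.eval_C, Polynomial.eval_comp, Polynomial.eval_neg,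
      Polynomial.eval_X, neg_neg]
    rw [(hq n).1, h1]

end Aux


section Aux2

open Classical in
lemma aux_burnside {G X : Type*} [Group G] [Fintype G] [MulAction G X] [Finite X]
    (C : X → Prop) (hC : ∀ (g : G) x, C x → C (g • x)) :
    ∑ g : G, Nat.card {x : X // C x ∧ g • x = x} =
      Nat.card (Quot fun a b : {x : X // C x} => ∃ g : G, b.1 = g • a.1) * Fintype.card G := by
  letI act : MulAction G {x : X // C x} :=
    { smul := fun g x => ⟨g • x.1, hC g x.1 x.2⟩
      one_smul := fun x => Subtype.ext (one_smul G x.1)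
      mul_smul := fun g h x => Subtype.ext (mul_smul g h x.1) }
  haveI : Fintype {x : X // C x} := Fintype.ofFinite _
  have h := MulAction.sum_card_fixedBy_eq_card_orbits_mul_card_group G {x : X // C x}
  have e1 : ∀ g : G, Nat.card {x : X // C x ∧ g • x = x} =
      Fintype.card (MulAction.fixedBy {x : X // C x} g) := by
    intro g
    rw [← Nat.card_eq_fintype_card]
    apply Nat.card_congr
    exact
    { toFun := fun x => ⟨⟨x.1, x.2.1⟩, Subtype.ext x.2.2⟩
      invFun := fun x => ⟨x.1.1, x.1.2, congrArg Subtype.val x.2⟩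
      left_inv := fun x => rfl
      right_inv := fun x => rfl }
  have e2 : Nat.card (Quot fun a b : {x : X // C x} => ∃ g : G, b.1 = g • a.1) =
      Fintype.card (Quotient (MulAction.orbitRel G {x : X // C x})) := by
    rw [← Nat.card_eq_fintype_card]
    apply Nat.card_congr
    refine Quot.congrRight fun a b => ?_
    rw [Setoid.comm', MulAction.orbitRel_apply, MulAction.mem_orbit_iff]
    constructor
    · rintro ⟨g, hg⟩
      exact ⟨g, Subtype.ext hg.symm⟩
    · rintro ⟨g, hg⟩
      exact ⟨g, (congrArg Subtype.val hg).symm⟩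
  rw [e2, ← h]
  exact Finset.sum_congr rfl fun g _ => e1 g

open Classical in
lemma aux_signed {G X : Type*} [Group G] [Fintype G] [MulAction G X] [Finite X]
    (C : X → Prop) (hC : ∀ (g : G) x, C x → C (g • x)) (χ : G →* ℤˣ) :
    ∑ g : G, ((χ g : ℤ) : ℚ) * Nat.card {x : X // C x ∧ g • x = x} =
      Nat.card (Quot fun a b : {x : X // C x ∧ ∀ g : G, g • x = x → χ g = 1} =>
        ∃ g : G, b.1 = g • a.1) * Fintype.card G := by
  have hb := aux_burnside (G := G) (fun x => C x ∧ ∀ g : G, g • x = x → χ g = 1) (by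
    intro g x ⟨h1, h2⟩
    refine ⟨hC g x h1, fun k hk => ?_⟩
    have : (g⁻¹ * k * g) • x = x := by
      rw [mul_smul, mul_smul, hk, inv_smul_smul]
    have := h2 _ this
    rw [map_mul, map_mul, mul_right_comm, ← map_mul, inv_mul_cancel, map_one, one_mul] at this
    exact this)
  rw [← Nat.cast_mul, ← hb]
  haveI : Fintype X := Fintype.ofFinite _
  push_cast
  have hc : ∀ (D : X → Prop), (Nat.card {x : X // D x} : ℚ) = ∑ x : X, if D x then 1 else 0 := by
    intro D
    rw [Nat.card_eq_fintype_card, Fintype.card_subtype]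
    simp
  simp only [hc, Finset.mul_sum]
  rw [Finset.sum_comm, Finset.sum_comm (s := (Finset.univ : Finset G))]
  refine Finset.sum_congr rfl fun x _ => ?_
  by_cases hx : C x
  swap
  · simp [hx]
  by_cases he : ∀ g : G, g • x = x → χ g = 1
  · refine Finset.sum_congr rfl fun g _ => ?_
    by_cases hg : g • x = x
    · have h1 : C x ∧ g • x = x := ⟨hx, hg⟩
      have h2 : (C x ∧ ∀ g : G, g • x = x → χ g = 1) ∧ g • x = x := ⟨⟨hx, he⟩, hg⟩
      rw [if_pos h1, if_pos h2, he g hg]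
      simp
    · simp [hg]
  · have h2 : ∀ g : G, ¬ ((C x ∧ ∀ g : G, g • x = x → χ g = 1) ∧ g • x = x) :=
      fun g h => he h.1.2
    simp only [h2, if_false, Finset.sum_const_zero]
    push Not at he
    obtain ⟨k, hk, hk1⟩ := he
    have hk1 : χ k = -1 := (Int.units_eq_one_or _).resolve_left hk1
    have hs := Equiv.sum_comp (Equiv.mulLeft k)
      (fun g => ((χ g : ℤ) : ℚ) * if C x ∧ g • x = x then 1 else 0)
    have hs2 : ∀ g : G, ((χ (Equiv.mulLeft k g) : ℤ) : ℚ) *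
        (if C x ∧ (Equiv.mulLeft k g) • x = x then 1 else 0) =
        - (((χ g : ℤ) : ℚ) * if C x ∧ g • x = x then 1 else 0) := by
      intro g
      have : (k * g) • x = x ↔ g • x = x := by
        rw [mul_smul]
        constructor
        · intro h
          have := congrArg (fun z => k⁻¹ • z) (h.trans hk.symm)
          simpa using this
        · intro h
          rw [h, hk]
      simp only [Equiv.coe_mulLeft, map_mul, hk1, this]
      push_cast
      ring
    simp only [hs2, Finset.sum_neg_distrib] at hs
    have h0 := self_eq_neg.1 hs.symm
    convert h0

open Classical in
lemma aux_sign {P : Type*} [Fintype P] [DecidableEq P] (σ : Equiv.Perm P) (s : Setoid P)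
    (hs : ∀ x y, s x y ↔ σ.SameCycle x y) :
    ((Equiv.Perm.sign σ : ℤ) : ℚ) = (-1) ^ (Fintype.card P) * (-1) ^ (Nat.card (Quotient s)) := by
  let F : P → Equiv.Perm P ⊕ P := fun x => if σ x = x then Sum.inr x else Sum.inl (σ.cycleOf x)
  have hF : ∀ x y, s x y ↔ F x = F y := by
    intro x y
    rw [hs]
    by_cases hx : σ x = x
    · by_cases hy : σ y = y
      · simp only [F, hx, hy, if_true, Sum.inr.injEq]
        constructor
        · rintro ⟨k, hk⟩
          rw [Equiv.Perm.zpow_apply_eq_self_of_apply_eq_self hx] at hk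
          exact hk
        · rintro rfl; exact Equiv.Perm.SameCycle.refl _ _
      · simp only [F, hx, hy, if_true, if_false, reduceCtorEq, iff_false]
        intro h
        exact hy (h.apply_eq_self_iff.1 hx)
    · by_cases hy : σ y = y
      · simp only [F, hx, hy, if_true, if_false, reduceCtorEq, iff_false]
        intro h
        exact hx (h.apply_eq_self_iff.2 hy)
      · simp only [F, hx, hy, if_false, Sum.inl.injEq]
        exact Equiv.Perm.sameCycle_iff_cycleOf_eq_of_mem_support
          (Equiv.Perm.mem_support.2 hx) (Equiv.Perm.mem_support.2 hy)
  have hs' : s = Setoid.ker F := by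
    ext x y
    rw [hF]; rfl
  have hcard : Nat.card (Quotient s) =
      σ.cycleFactorsFinset.card + (Finset.univ.filter fun x => σ x = x).card := by
    rw [hs', Nat.card_congr (Setoid.quotientKerEquivRange F), ← Finset.card_disjSum]
    have hr : Set.range F = ((σ.cycleFactorsFinset.disjSum
        (Finset.univ.filter fun x => σ x = x) : Finset _) : Set (Equiv.Perm P ⊕ P)) := by
      ext z
      rw [Finset.mem_coe, Finset.mem_disjSum]
      constructor
      · rintro ⟨x, rfl⟩
        by_cases hx : σ x = x
        · exact Or.inr ⟨x, by simp [hx], by simp [F, hx]⟩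
        · refine Or.inl ⟨σ.cycleOf x, ?_, by simp [F, hx]⟩
          exact Equiv.Perm.cycleOf_mem_cycleFactorsFinset_iff.2 (Equiv.Perm.mem_support.2 hx)
      · rintro (⟨c, hc, rfl⟩ | ⟨x, hx, rfl⟩)
        · obtain ⟨x, hx⟩ := (Equiv.Perm.mem_cycleFactorsFinset_iff.1 hc).1.nonempty_support
          refine ⟨x, ?_⟩
          have h1 := Equiv.Perm.cycle_is_cycleOf hx hc
          have h2 : σ x ≠ x :=
            Equiv.Perm.mem_support.1 (Equiv.Perm.mem_cycleFactorsFinset_support_le hc hx)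
          simp only [F, h2, if_false, h1]
        · refine ⟨x, ?_⟩
          have h2 : σ x = x := (Finset.mem_filter.1 hx).2
          simp only [F, h2, if_true]
    rw [hr, Nat.card_coe_set_eq, Set.ncard_coe_finset]
  have hsup : σ.support.card + (Finset.univ.filter fun x => σ x = x).card = Fintype.card P := by
    rw [add_comm]
    have := Finset.card_filter_add_card_filter_not (s := (Finset.univ : Finset P)) (fun x => σ x = x)
    rw [Finset.card_univ] at this
    exact this
  rw [hcard, ← hsup, Equiv.Perm.sign_of_cycleType, Equiv.Perm.sum_cycleType,
    Equiv.Perm.cycleType_def, Multiset.card_map]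
  push_cast
  rw [pow_add, pow_add, pow_add]
  have : ((-1 : ℚ) ^ (Finset.univ.filter fun x => σ x = x).card) *
    ((-1 : ℚ) ^ (Finset.univ.filter fun x => σ x = x).card) = 1 := by
    rw [← mul_pow]; simp
  have h2 : (Multiset.card σ.cycleFactorsFinset.1) = σ.cycleFactorsFinset.card := rfl
  rw [h2]
  linear_combination (- (-1 : ℚ) ^ σ.support.card * (-1) ^ σ.cycleFactorsFinset.card) * this

lemma aux_signed' {G X : Type*} [Group G] [Fintype G] [MulAction G X] [Finite X]
    (C : X → Prop) (hC : ∀ (g : G) x, C x → C (g • x)) (χ : G →* ℤˣ)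
    (F : G → X → Prop) (hF : ∀ g x, g • x = x ↔ F g x)
    (E : G → X → X → Prop) (hE : ∀ g x y, y = g • x ↔ E g x y) :
    ∑ g : G, ((χ g : ℤ) : ℚ) * Nat.card {x : X // C x ∧ F g x} =
      Nat.card (Quot fun a b : {x : X // C x ∧ ∀ g : G, F g x → χ g = 1} =>
        ∃ g : G, E g a.1 b.1) * Fintype.card G := by
  have h1 : F = fun g x => g • x = x := by
    funext g x
    exact propext (hF g x).symm
  have h2 : E = fun g x y => y = g • x := by
    funext g x y
    exact propext (hE g x y).symm
  subst h1 h2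
  exact aux_signed C hC χ

/-- The quotient poset by the cyclic group generated by `g`. -/
@[reducible] def auxOrder {P : Type*} [PartialOrder P] [Fintype P] (s : Setoid P)
    (H : Type*) [Group H] [Finite H] [MulAction H P]
    (hact : ∀ (g : H) (p q : P), p < q → g • p < g • q)
    (hs : ∀ x y, s x y ↔ ∃ h : H, h • x = y) : PartialOrder (Quotient s) :=
  haveI hirr : ∀ (x : P) (h : H), ¬ x < h • x := by
    intro x h hx
    have : ∀ k : ℕ, x < h ^ (k+1) • x := by
      intro k
      induction k with
      | zero => simpa using hx
      | succ k ih =>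
        have := hact h _ _ ih
        rw [← mul_smul, ← pow_succ'] at this
        exact hx.trans this
    obtain ⟨m, hm, hm1⟩ := isOfFinOrder_iff_pow_eq_one.1 (isOfFinOrder_of_finite h)
    have := this (m - 1)
    rw [Nat.sub_add_cancel hm, hm1, one_smul] at this
    exact lt_irrefl _ this
  haveI htrans : ∀ a b c : Quotient s,
      (∃ x y : P, Quotient.mk s x = a ∧ Quotient.mk s y = b ∧ x < y) →
      (∃ x y : P, Quotient.mk s x = b ∧ Quotient.mk s y = c ∧ x < y) →
      (∃ x y : P, Quotient.mk s x = a ∧ Quotient.mk s y = c ∧ x < y) := by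
    rintro _ _ _ ⟨x, y, rfl, rfl, hxy⟩ ⟨y', z, h, rfl, hyz⟩
    obtain ⟨k, rfl⟩ := (hs _ _).1 (Quotient.exact h)
    refine ⟨x, k • z, rfl, ?_, hxy.trans (hact k _ _ hyz)⟩
    exact (Quotient.sound ((hs _ _).2 ⟨k, rfl⟩)).symm
  haveI hirr' : ∀ a : Quotient s,
      ¬ (∃ x y : P, Quotient.mk s x = a ∧ Quotient.mk s y = a ∧ x < y) := by
    rintro _ ⟨x, y, rfl, h, hxy⟩
    obtain ⟨k, rfl⟩ := (hs _ _).1 (Quotient.exact h.symm)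
    exact hirr _ _ hxy
  { le := fun a b => a = b ∨ ∃ x y : P, Quotient.mk s x = a ∧ Quotient.mk s y = b ∧ x < y
    lt := fun a b => ∃ x y : P, Quotient.mk s x = a ∧ Quotient.mk s y = b ∧ x < y
    le_refl := fun a => Or.inl rfl
    le_trans := by
      rintro a b c (rfl | h1) (rfl | h2)
      · exact Or.inl rfl
      · exact Or.inr h2
      · exact Or.inr h1
      · exact Or.inr (htrans _ _ _ h1 h2)
    le_antisymm := by
      rintro a b (rfl | h1) (h | h2)
      · rfl
      · rfl
      · exact h.symm
      · exact (hirr' _ (htrans _ _ _ h1 h2)).elim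
    lt_iff_le_not_ge := by
      intro a b
      constructor
      · intro h
        refine ⟨Or.inr h, ?_⟩
        rintro (rfl | h2)
        · exact hirr' _ h
        · exact hirr' _ (htrans _ _ _ h h2)
      · rintro ⟨rfl | h, h2⟩
        · exact (h2 (Or.inl rfl)).elim
        · exact h }

/-- For each `g`: reciprocity for fixed maps. -/
lemma aux_fixed {P G : Type*} [PartialOrder P] [Fintype P] [DecidableEq P]
    [Group G] [Fintype G] [MulAction G P]
    (hact : ∀ (g : G) (p q : P), p < q → g • p < g • q) (g : G) :
    ∃ f : Polynomial ℚ, ∀ n : ℕ,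
    f.eval (n : ℚ) = Nat.card {φ : P → Fin n // (∀ p q, p < q → φ p < φ q) ∧
      ∀ x, φ (g⁻¹ • x) = φ x} ∧
    f.eval (-(n : ℚ)) = (-1) ^ (Fintype.card P) *
      ((Equiv.Perm.sign (MulAction.toPerm g : Equiv.Perm P) : ℤ) *
      Nat.card {φ : P → Fin n // (∀ p q, p < q → φ p ≤ φ q) ∧ ∀ x, φ (g⁻¹ • x) = φ x}) := by
  classical
  let s : Setoid P := Equiv.Perm.SameCycle.setoid (MulAction.toPerm g : Equiv.Perm P)
  have hpow : ∀ (k : ℤ) (x : P), ((MulAction.toPerm g : Equiv.Perm P) ^ k) x = g ^ k • x := by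
    intro k x
    have : (MulAction.toPerm g : Equiv.Perm P) = MulAction.toPermHom G P g := rfl
    rw [this, ← map_zpow]; rfl
  have hs : ∀ x y, s x y ↔ ∃ h : Subgroup.zpowers g, h • x = y := by
    intro x y
    constructor
    · rintro ⟨k, hk⟩
      rw [hpow] at hk
      exact ⟨⟨g ^ k, k, rfl⟩, hk⟩
    · rintro ⟨⟨_, k, rfl⟩, hk⟩
      refine ⟨k, ?_⟩
      rw [hpow]
      exact hk
  let o : PartialOrder (Quotient s) := auxOrder s (Subgroup.zpowers g) (fun h p q hpq => hact h.1 p q hpq) hs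
  haveI : Fintype (Quotient s) := Fintype.ofFinite _
  obtain ⟨f, hf⟩ := @aux_stanley (Quotient s) o _
  have hconst : ∀ {n : ℕ} (φ : P → Fin n), (∀ x, φ (g⁻¹ • x) = φ x) →
      ∀ x y, s x y → φ x = φ y := by
    rintro n φ hφ x y ⟨k, hk⟩
    rw [hpow] at hk
    subst hk
    have h1 : ∀ x, φ (g • x) = φ x := by
      intro x
      rw [← hφ (g • x), inv_smul_smul]
    induction k with
    | zero => simp
    | succ k ih => rw [add_comm, zpow_add, mul_smul, zpow_one, h1, ih]
    | pred k ih => rw [sub_eq_neg_add, add_comm, add_comm, zpow_add, mul_smul, zpow_neg_one, hφ, ih]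
  have hmk : ∀ x : P, Quotient.mk s (g⁻¹ • x) = Quotient.mk s x := by
    intro x
    refine Quotient.sound ⟨1, ?_⟩
    rw [hpow, zpow_one, smul_inv_smul]
  have hequiv : ∀ {n : ℕ} (r : Fin n → Fin n → Prop),
      Nat.card {φ : Quotient s → Fin n // ∀ x y, o.lt x y → r (φ x) (φ y)} =
      Nat.card {φ : P → Fin n // (∀ p q, p < q → r (φ p) (φ q)) ∧ ∀ x, φ (g⁻¹ • x) = φ x} := by
    intro n r
    apply Nat.card_congr
    exact
    { toFun := fun φ => ⟨fun x => φ.1 (Quotient.mk s x),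
        fun p q h => φ.2 _ _ ⟨p, q, rfl, rfl, h⟩, fun x => congrArg φ.1 (hmk x)⟩
      invFun := fun φ => ⟨Quotient.lift φ.1 (hconst φ.1 φ.2.2), by
        rintro _ _ ⟨x, y, rfl, rfl, h⟩
        exact φ.2.1 x y h⟩
      left_inv := by
        intro φ
        apply Subtype.ext
        funext x
        induction x using Quotient.inductionOn
        rfl
      right_inv := fun φ => rfl }
  refine ⟨f, fun n => ⟨?_, ?_⟩⟩
  · exact (hf n).1.trans (congrArg (fun k : ℕ => (k : ℚ)) (hequiv (fun a b => a < b)))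
  · refine (hf n).2.trans ((congrArg (fun k : ℕ => (-1 : ℚ) ^ (Fintype.card (Quotient s)) * (k : ℚ))
      (hequiv (fun a b => a ≤ b))).trans ?_)
    rw [aux_sign _ s (fun x y => Iff.rfl),
      Nat.card_eq_fintype_card (α := Quotient s), ← mul_assoc, ← mul_assoc, ← mul_pow]
    simp

end Aux2

/-- Let `P` be a finite poset and `G` a finite group acting on `P` by
automorphisms, and let `p` be the polynomial with `p(n) = |Hom°(P,[n])/G|` for all
integers `n ≥ 1`.  Then for all integers `n ≥ 1` we have
`p(-n) = (-1)^{|P|} · |Hom₊(P,[n])/G|`, the number of `G`-orbits of even order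
preserving maps `P → [n]`, up to sign.  (A map `φ` is even if every `g ∈ G` fixing `φ`
has sign `+1` as a permutation of `P`.) -/
theorem stmt_10 {P G : Type*} [PartialOrder P] [Fintype P] [DecidableEq P]
    [Group G] [Fintype G] [MulAction G P]
    (hact : ∀ (g : G) (p q : P), p < q → g • p < g • q)
    (p : Polynomial ℚ)
    (hp : ∀ n : ℕ, 1 ≤ n →
      p.eval (n : ℚ) =
        Nat.card (Quot (fun φ ψ : {φ : P → Fin n // ∀ p q : P, p < q → φ p < φ q} =>
          ∃ g : G, ∀ x : P, ψ.1 x = φ.1 (g⁻¹ • x))))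
    (n : ℕ) (hn : 1 ≤ n) :
    p.eval (-(n : ℚ)) = (-1) ^ (Fintype.card P) *
      Nat.card (Quot (fun φ ψ : {φ : P → Fin n //
          (∀ p q : P, p < q → φ p ≤ φ q) ∧
          ∀ g : G, (∀ x : P, φ (g⁻¹ • x) = φ x) →
            Equiv.Perm.sign (MulAction.toPerm g : Equiv.Perm P) = 1} =>
        ∃ g : G, ∀ x : P, ψ.1 x = φ.1 (g⁻¹ • x))) := by
  choose f hf using aux_fixed (G := G) hact
  letI act : ∀ m : ℕ, MulAction G (P → Fin m) := fun m => arrowAction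
  have hsm : ∀ {m : ℕ} (g : G) (φ : P → Fin m), g • φ = φ ↔ ∀ x, φ (g⁻¹ • x) = φ x :=
    fun g φ => funext_iff
  have hsm2 : ∀ {m : ℕ} (g : G) (φ ψ : P → Fin m), ψ = g • φ ↔ ∀ x, ψ x = φ (g⁻¹ • x) :=
    fun g φ ψ => funext_iff
  have hG : (Fintype.card G : ℚ) ≠ 0 := Nat.cast_ne_zero.2 Fintype.card_ne_zero
  have hpf : Polynomial.C (Fintype.card G : ℚ) * p = ∑ g : G, f g := by
    apply Polynomial.eq_of_infinite_eval_eq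
    refine Set.Infinite.mono ?_ (Set.infinite_range_of_injective
      (f := fun k : ℕ => ((k + 1 : ℕ) : ℚ)) (fun a b h => by simpa using h))
    rintro _ ⟨k, rfl⟩
    change Polynomial.eval (((k + 1 : ℕ) : ℚ)) _ = Polynomial.eval (((k + 1 : ℕ) : ℚ)) _
    rw [Polynomial.eval_mul, Polynomial.eval_C, Polynomial.eval_finsetSum, hp (k+1) (by omega)]
    have hb := aux_burnside (G := G) (X := P → Fin (k+1))
      (fun φ => ∀ p q : P, p < q → φ p < φ q)
      (fun g φ h a b hab => h _ _ (hact g⁻¹ a b hab))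
    simp only [hsm, hsm2] at hb
    rw [mul_comm, ← Nat.cast_mul, ← hb]
    rw [Nat.cast_sum]
    exact Finset.sum_congr rfl fun g _ => ((hf g (k+1)).1).symm
  have he := congrArg (Polynomial.eval (-(n : ℚ))) hpf
  rw [Polynomial.eval_mul, Polynomial.eval_C, Polynomial.eval_finsetSum] at he
  simp only [(hf _ n).2] at he
  rw [← Finset.mul_sum] at he
  have hb := aux_signed' (G := G) (X := P → Fin n)
      (fun φ => ∀ p q : P, p < q → φ p ≤ φ q)
      (fun g φ h a b hab => h _ _ (hact g⁻¹ a b hab))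
      (Equiv.Perm.sign.comp (MulAction.toPermHom G P)) _ hsm _ hsm2
  refine mul_left_cancel₀ hG (he.trans ?_)
  rw [mul_left_comm, mul_comm (Fintype.card G : ℚ)]
  exact congrArg _ hb
end

section
/- Let A be a finite antichain (a finite poset in which no two distinct elements are comparable) and G a finite group acting on A, and let p be the polynomial with p(n) = |Hom(A,[n])/G| for all integers n ≥ 1. Then for all integers n ≥ 1, p(-n) = (-1)^{|A|} · |Hom_+(A,[n])/G|, the number of G-orbits of even maps A → [n], up to sign. -/
open Classical in
theorem burn_aux {G X : Type*} [Group G] [Fintype G] [MulAction G X] [Finite X] :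
    (∑ g : G, Nat.card {x : X // g • x = x}) =
      Nat.card (Quot (fun a b : X => ∃ g : G, b = g • a)) * Fintype.card G := by
  have := Fintype.ofFinite X
  have h := MulAction.sum_card_fixedBy_eq_card_orbits_mul_card_group G X
  have e : Quot (fun a b : X => ∃ g : G, b = g • a) ≃ MulAction.orbitRel.Quotient G X := by
    refine Quot.congrRight ?_
    intro a b
    change _ ↔ a ∈ MulAction.orbit G b
    rw [MulAction.mem_orbit_symm]
    constructor
    · rintro ⟨g, h⟩
      exact ⟨g, h.symm⟩
    · rintro ⟨g, h⟩
      exact ⟨g, h.symm⟩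
  rw [Nat.card_congr e, Nat.card_eq_fintype_card, ← h]
  refine Finset.sum_congr rfl fun g _ => ?_
  rw [← Nat.card_eq_fintype_card]
  rfl

open Classical in
theorem char_sum_aux {G X : Type*} [Group G] [Fintype G] [MulAction G X] (χ : G →* ℤˣ) (x : X) :
    (∑ g : G, if g • x = x then ((χ g : ℤ) : ℚ) else 0) =
      if (∀ g : G, g • x = x → χ g = 1) then ∑ g : G, (if g • x = x then (1 : ℚ) else 0) else 0 := by
  split_ifs with h
  · refine Finset.sum_congr rfl fun g _ => ?_
    split_ifs with h'
    · rw [h g h']; simp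
    · rfl
  · push Not at h
    obtain ⟨k, hk, hk1⟩ := h
    have hk2 : χ k = -1 := (Int.units_eq_one_or _).resolve_left hk1
    have : (∑ g : G, if g • x = x then ((χ g : ℤ) : ℚ) else 0) =
        ∑ g : G, -(if g • x = x then ((χ g : ℤ) : ℚ) else 0) := by
      rw [← Equiv.sum_comp (Equiv.mulLeft k)]
      refine Finset.sum_congr rfl fun g _ => ?_
      have : (k * g) • x = x ↔ g • x = x := by
        rw [mul_smul]
        constructor
        · intro h
          rw [← hk] at h
          have := MulAction.injective k h
          rwa [hk] at this
        · intro h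
          rw [h, hk]
      simp only [Equiv.coe_mulLeft, this, map_mul, hk2]
      split_ifs <;> simp
    rw [Finset.sum_neg_distrib] at this
    linarith

open Classical in
theorem burn_even_aux {G X : Type*} [Group G] [Fintype G] [MulAction G X] [Finite X]
    (χ : G →* ℤˣ) :
    (∑ g : G, ((χ g : ℤ) : ℚ) * Nat.card {x : X // g • x = x}) =
      Nat.card (Quot (fun a b : {x : X // ∀ g : G, g • x = x → χ g = 1} =>
        ∃ g : G, b.1 = g • a.1)) * Fintype.card G := by
  have := Fintype.ofFinite X
  let Y := {x : X // ∀ g : G, g • x = x → χ g = 1}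
  letI : MulAction G Y :=
    { smul := fun k y => ⟨k • y.1, fun g hg => by
        have := y.2 (k⁻¹ * g * k) (by rw [mul_smul, mul_smul, hg, inv_smul_smul])
        rwa [map_mul, map_mul, map_inv, mul_comm, mul_inv_cancel_left] at this⟩
      one_smul := fun y => Subtype.ext (one_smul G y.1)
      mul_smul := fun a b y => Subtype.ext (mul_smul a b y.1) }
  have hs : ∀ (g : G) (y : Y), (g • y).1 = g • y.1 := fun _ _ => rfl
  have h := burn_aux (G := G) (X := Y)
  have e : (fun a b : Y => ∃ g : G, b = g • a) = (fun a b : Y => ∃ g : G, b.1 = g • a.1) := by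
    funext a b
    exact propext (exists_congr fun g => Subtype.ext_iff)
  rw [e] at h
  have h2 := congrArg (Nat.cast (R := ℚ)) h
  rw [Nat.cast_mul, Nat.cast_sum] at h2
  refine Eq.trans ?_ h2
  have c1 : ∀ g : G, (Nat.card {x : X // g • x = x} : ℚ) =
      ∑ x : X, if g • x = x then (1 : ℚ) else 0 := by
    intro g
    rw [Nat.card_eq_fintype_card, Fintype.card_subtype]; simp
  have c2 : ∀ g : G, (Nat.card {y : Y // g • y = y} : ℚ) =
      ∑ x : X, if (∀ g : G, g • x = x → χ g = 1) then (if g • x = x then (1 : ℚ) else 0) else 0 := by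
    intro g
    have : (∑ y : Y, if g • y.1 = y.1 then (1 : ℚ) else 0) = (Nat.card {y : Y // g • y = y} : ℚ) := by
      have hi : ∀ y : Y, g • y.1 = y.1 ↔ g • y = y := fun y =>
        ⟨fun h => Subtype.ext h, fun h => congrArg Subtype.val h⟩
      simp only [hi]
      rw [Nat.card_eq_fintype_card, Fintype.card_subtype, Finset.sum_boole]
    rw [← this]
    conv_rhs => rw [← Finset.sum_filter]
    symm
    exact Finset.sum_subtype _ (fun x => by rw [Finset.mem_filter]; exact and_iff_right (Finset.mem_univ x)) _
  simp only [c1, c2, Finset.mul_sum]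
  rw [Finset.sum_comm]
  conv_rhs => rw [Finset.sum_comm]
  refine Finset.sum_congr rfl fun x _ => ?_
  have := char_sum_aux χ x
  simp only [mul_ite, mul_one, mul_zero]
  rw [this]
  split_ifs <;> simp

open Classical in
theorem cycles_aux {A : Type*} [Fintype A] [DecidableEq A] (σ : Equiv.Perm A) :
    ∃ c : ℕ, (∀ n : ℕ, Nat.card {f : A → Fin n // ∀ x, f (σ x) = f x} = n ^ c) ∧
      (-1 : ℚ) ^ c = (-1) ^ (Fintype.card A) * ((Equiv.Perm.sign σ : ℤ) : ℚ) := by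
  let T := σ.cycleFactorsFinset ⊕ Function.fixedPoints σ
  let F : A → T := fun x => if h : σ x = x then Sum.inr ⟨x, h⟩ else
    Sum.inl ⟨σ.cycleOf x, Equiv.Perm.cycleOf_mem_cycleFactorsFinset_iff.2
      (Equiv.Perm.mem_support.2 h)⟩
  have hF : ∀ x, F (σ x) = F x := by
    intro x
    by_cases h : σ x = x
    · rw [h]
    · have h' : σ (σ x) ≠ σ x := fun h' => h (σ.injective h')
      simp [F, h]
  have hsc : ∀ x y, F x = F y → σ.SameCycle x y := by
    intro x y hxy
    by_cases h : σ x = x <;> by_cases h' : σ y = y <;> simp only [F, h, h', dite_true, dite_false] at hxy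
    · have := congrArg Subtype.val (Sum.inr.inj hxy)
      simp only at this
      rw [this]
    · cases hxy
    · cases hxy
    · exact (Equiv.Perm.sameCycle_iff_cycleOf_eq_of_mem_support
        (Equiv.Perm.mem_support.2 h) (Equiv.Perm.mem_support.2 h')).2
          (congrArg Subtype.val (Sum.inl.inj hxy))
  have hsurj : Function.Surjective F := by
    rintro (⟨c, hc⟩ | ⟨x, hx⟩)
    · obtain ⟨x, hx⟩ := (Equiv.Perm.mem_cycleFactorsFinset_iff.1 hc).1.nonempty_support
      have hx' : σ x ≠ x := Equiv.Perm.mem_support.1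
        (Equiv.Perm.mem_cycleFactorsFinset_support_le hc hx)
      refine ⟨x, ?_⟩
      simp only [F, hx', dite_false]
      congr 2
      exact (Equiv.Perm.cycle_is_cycleOf hx hc).symm
    · refine ⟨x, ?_⟩
      have hx' : σ x = x := hx
      simp [F, hx']
  refine ⟨Fintype.card T, fun n => ?_, ?_⟩
  · have e : (T → Fin n) ≃ {f : A → Fin n // ∀ x, f (σ x) = f x} := by
      refine Equiv.ofBijective (fun u => ⟨u ∘ F, fun x => by simp [hF]⟩) ⟨?_, ?_⟩
      · intro u v huv
        have := congrArg Subtype.val huv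
        exact hsurj.injective_comp_right this
      · rintro ⟨f, hf⟩
        have hz : ∀ x y, σ.SameCycle x y → f x = f y := by
          intro x y hxy
          obtain ⟨k, -, -, rfl⟩ := hxy.exists_pow_eq
          induction k with
          | zero => rfl
          | succ k ih => 
            rw [pow_succ', Equiv.Perm.mul_apply, hf]
            apply ih
            exact ⟨k, by simp⟩
        refine ⟨fun t => f (hsurj t).choose, Subtype.ext (funext fun x => ?_)⟩
        exact hz _ _ (hsc _ _ (hsurj (F x)).choose_spec)
    rw [← Nat.card_congr e]
    simp
  · have h1 : Fintype.card T = Multiset.card σ.cycleType + Fintype.card (Function.fixedPoints σ) := by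
      rw [Fintype.card_sum, Equiv.Perm.cycleType_def]
      simp
    have h2 := σ.card_fixedPoints
    have h3 := σ.sum_cycleType_le
    have h4 : Fintype.card A = σ.cycleType.sum + Fintype.card (Function.fixedPoints σ) := by omega
    rw [Equiv.Perm.sign_of_cycleType, h1, h4]
    push_cast
    have : ((-1 : ℚ) ^ σ.cycleType.sum) * (-1) ^ σ.cycleType.sum = 1 := by
      rw [← mul_pow]; simp
    rw [pow_add, pow_add, pow_add]
    linear_combination (-(-1) ^ (Multiset.card σ.cycleType) * (-1) ^ (Fintype.card (Function.fixedPoints σ)) : ℚ) * this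


/-- Let `A` be a finite antichain (a finite poset in which no two
distinct elements are comparable) and `G` a finite group acting on `A`, and let `p` be
the polynomial with `p(n) = |Hom(A,[n])/G|` for all integers `n ≥ 1`, where `Hom(A,[n])`
is the set of all maps `A → [n]`.  Then for all integers `n ≥ 1` we have
`p(-n) = (-1)^{|A|} · |Hom₊(A,[n])/G|`, the number of `G`-orbits of even maps `A → [n]`,
up to sign.  (A map `φ` is even if every `g ∈ G` fixing `φ` has sign `+1` as a
permutation of `A`.) -/
theorem stmt_11 {A G : Type*} [PartialOrder A] [Fintype A] [DecidableEq A]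
    [Group G] [Fintype G] [MulAction G A]
    (hact : ∀ (g : G) (p q : A), p < q → g • p < g • q)
    (hA : ∀ a b : A, a ≤ b → a = b)
    (p : Polynomial ℚ)
    (hp : ∀ n : ℕ, 1 ≤ n →
      p.eval (n : ℚ) =
        Nat.card (Quot (fun f h : A → Fin n => ∃ g : G, ∀ x : A, h x = f (g⁻¹ • x))))
    (n : ℕ) (hn : 1 ≤ n) :
    p.eval (-(n : ℚ)) = (-1) ^ (Fintype.card A) *
      Nat.card (Quot (fun f h : {f : A → Fin n //
          ∀ g : G, (∀ x : A, f (g⁻¹ • x) = f x) →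
            Equiv.Perm.sign (MulAction.toPerm g : Equiv.Perm A) = 1} =>
        ∃ g : G, ∀ x : A, h.1 x = f.1 (g⁻¹ • x))) := by
  classical
  choose c hc hsgn using fun g : G => cycles_aux (MulAction.toPerm g⁻¹ : Equiv.Perm A)
  have hG : (Fintype.card G : ℚ) ≠ 0 := by exact_mod_cast Fintype.card_ne_zero
  have hfix : ∀ (m : ℕ) (g : G), Nat.card {f : A → Fin m // arrowAction.toSMul.smul g f = f} = m ^ c g := by
    intro m g
    rw [← hc]
    exact Nat.card_congr (Equiv.subtypeEquivRight fun f => funext_iff)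
  let χ : G →* ℤˣ := Equiv.Perm.sign.comp (MulAction.toPermHom G A)
  have hχ : ∀ g : G, χ g = Equiv.Perm.sign (MulAction.toPerm g : Equiv.Perm A) := fun _ => rfl
  have hsgn' : ∀ g, (-1 : ℚ) ^ c g = (-1) ^ (Fintype.card A) * ((χ g : ℤ) : ℚ) := by
    intro g
    have : χ g⁻¹ = χ g := by rw [map_inv, Int.units_inv_eq_self]
    rw [hsgn, ← hχ, this]
  have hpoly : p = Polynomial.C (Fintype.card G : ℚ)⁻¹ * ∑ g : G, Polynomial.X ^ c g := by
    apply Polynomial.eq_of_infinite_eval_eq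
    refine Set.Infinite.mono ?_ (Set.infinite_range_of_injective
      (f := fun m : ℕ => ((m + 1 : ℕ) : ℚ)) (fun a b h => by simpa using h))
    rintro _ ⟨m, rfl⟩
    simp only [Set.mem_ofPred_eq]
    rw [hp (m + 1) (by omega)]
    have h := @burn_aux G (A → Fin (m + 1)) _ _ arrowAction _
    have e : (fun f h : A → Fin (m + 1) => ∃ g : G, ∀ x : A, h x = f (g⁻¹ • x)) =
        (fun a b => ∃ g : G, b = arrowAction.toSMul.smul g a) := by
      funext f h
      simp only [funext_iff]
      rfl
    rw [e]
    have h' := congrArg (Nat.cast (R := ℚ))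
      ((Finset.sum_congr rfl (fun g _ => hfix (m + 1) g)).symm.trans h)
    rw [Nat.cast_sum] at h'
    simp only [Polynomial.eval_mul, Polynomial.eval_C, Polynomial.eval_finsetSum,
      Polynomial.eval_pow, Polynomial.eval_X]
    simp only [← Nat.cast_pow]
    rw [h', Nat.cast_mul]
    field_simp
    rfl
  have h := @burn_even_aux G (A → Fin n) _ _ arrowAction _ χ
  have key : (∑ g : G, ((χ g : ℤ) : ℚ) * ((n ^ c g : ℕ) : ℚ)) =
      Nat.card (Quot (fun f h : {f : A → Fin n //
          ∀ g : G, (∀ x : A, f (g⁻¹ • x) = f x) →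
            Equiv.Perm.sign (MulAction.toPerm g : Equiv.Perm A) = 1} =>
        ∃ g : G, ∀ x : A, h.1 x = f.1 (g⁻¹ • x))) * Fintype.card G := by
    rw [← Finset.sum_congr rfl (fun g _ => by rw [← hfix n g])]
    refine h.trans ?_
    congr 2
    refine Nat.card_congr (Quot.congr (Equiv.subtypeEquivRight fun f => ?_) ?_)
    · refine forall_congr' fun g => imp_congr funext_iff Iff.rfl
    · intro a b
      exact exists_congr fun g => funext_iff
  rw [hpoly]
  simp only [Polynomial.eval_mul, Polynomial.eval_C, Polynomial.eval_finsetSum,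
      Polynomial.eval_pow, Polynomial.eval_X]
  have : (∑ g : G, (-(n : ℚ)) ^ c g) =
      (-1) ^ (Fintype.card A) * ∑ g : G, ((χ g : ℤ) : ℚ) * ((n ^ c g : ℕ) : ℚ) := by
    rw [Finset.mul_sum]
    refine Finset.sum_congr rfl fun g _ => ?_
    rw [neg_pow, hsgn']
    push_cast
    ring
  rw [this, key]
  field_simp
end

section
/- Let Γ be a finite simple graph and G a finite group acting on Γ by automorphisms. Then for all n ≥ 1, the number of G-orbits of proper n-colorings satisfies χ_{Γ,G}(n) = |Col_n(Γ)/G| = (1/|G|) · Σ_{g∈G} Σ_{σ∈Σ^g} Ω°_{Γ^σ_g}(n), where the inner sum ranges over the acyclic orientations of Γ fixed by g. In particular, χ_{Γ,G}(n) agrees for all n ≥ 1 with a polynomial of degree |V|. -/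
/-- An orientation of a simple graph `Γ`: an assignment of a head vertex to every edge,
which is a vertex of that edge. -/
def GraphOri {V : Type*} (Γ : SimpleGraph V) : Type _ :=
  {σ : Γ.edgeSet → V // ∀ e : Γ.edgeSet, σ e ∈ (e : Sym2 V)}

/-- The directed adjacency relation induced by an orientation: `u → v` iff `uv` is an
edge with head `v`. -/
def dirAdj {V : Type*} (Γ : SimpleGraph V) (σ : GraphOri Γ) (u v : V) : Prop :=
  ∃ h : Γ.Adj u v, σ.1 ⟨s(u, v), Γ.mem_edgeSet.mpr h⟩ = v

/-- An orientation is acyclic if it has no directed cycles, i.e. no vertex admits a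
nonempty directed path back to itself. -/
def oriAcyclic {V : Type*} (Γ : SimpleGraph V) (σ : GraphOri Γ) : Prop :=
  ∀ v : V, ¬ Relation.TransGen (dirAdj Γ σ) v v

/-- `oriSMulEq Γ hact g σ σ'` says that `σ' = g • σ`, where `(g • σ)(uv) = g • σ(g⁻¹ • uv)`.
In particular `oriSMulEq Γ hact g σ σ` says that `σ` is fixed by `g`. -/
def oriSMulEq {V G : Type*} [Group G] [MulAction G V] (Γ : SimpleGraph V)
    (hact : ∀ (g : G) (u v : V), Γ.Adj u v → Γ.Adj (g • u) (g • v))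
    (g : G) (σ σ' : GraphOri Γ) : Prop :=
  ∀ (u v : V) (h : Γ.Adj u v),
    σ'.1 ⟨s(u, v), Γ.mem_edgeSet.mpr h⟩ =
      g • σ.1 ⟨s(g⁻¹ • u, g⁻¹ • v), Γ.mem_edgeSet.mpr (hact g⁻¹ u v h)⟩

/-- A coloring `c` and an orientation `σ` are weakly compatible if every edge `uv` with
`c(u) < c(v)` is oriented towards `v`. -/
def weakCompat {V : Type*} (Γ : SimpleGraph V) {n : ℕ} (c : V → Fin n)
    (σ : GraphOri Γ) : Prop :=
  ∀ (u v : V) (h : Γ.Adj u v), c u < c v → σ.1 ⟨s(u, v), Γ.mem_edgeSet.mpr h⟩ = v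

/- quotient poset relation for Γ^σ_g -/
def quotDirRel {V G : Type*} [Group G] [MulAction G V] (Γ : SimpleGraph V)
    (g : G) (σ : GraphOri Γ)
    (a b : Quotient (MulAction.orbitRel (Subgroup.zpowers g) V)) : Prop :=
  ∃ u v : V, Quotient.mk (MulAction.orbitRel (Subgroup.zpowers g) V) u = a ∧
    Quotient.mk (MulAction.orbitRel (Subgroup.zpowers g) V) v = b ∧
    Relation.TransGen (dirAdj Γ σ) u v

theorem aux_burnside_s12 {V G : Type*} [Fintype V] [Group G] [Fintype G]
    [MulAction G V] (Γ : SimpleGraph V)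
    (hact : ∀ (g : G) (u v : V), Γ.Adj u v → Γ.Adj (g • u) (g • v)) (n : ℕ) :
    (Nat.card (Quot (fun c c' : {c : V → Fin n // ∀ u v : V, Γ.Adj u v → c u ≠ c v} =>
          ∃ g : G, ∀ x : V, c'.1 x = c.1 (g⁻¹ • x))) : ℚ) =
        (Fintype.card G : ℚ)⁻¹ * ∑ g : G,
          (Nat.card {c : V → Fin n //
            (∀ u v : V, Γ.Adj u v → c u ≠ c v) ∧ ∀ x, c (g⁻¹ • x) = c x} : ℚ) := by
  classical
  let A : MulAction G {c : V → Fin n // ∀ u v : V, Γ.Adj u v → c u ≠ c v} :=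
    { smul := fun g c => ⟨fun x => c.1 (g⁻¹ • x), fun u v h => c.2 _ _ (hact g⁻¹ u v h)⟩
      one_smul := by
        intro c
        apply Subtype.ext
        funext x
        change c.1 ((1 : G)⁻¹ • x) = c.1 x
        simp
      mul_smul := by
        intro g h c
        apply Subtype.ext
        funext x
        change c.1 ((g * h)⁻¹ • x) = c.1 (h⁻¹ • (g⁻¹ • x))
        rw [mul_inv_rev, mul_smul] }
  have hsm : ∀ (g : G) (c : {c : V → Fin n // ∀ u v : V, Γ.Adj u v → c u ≠ c v}) (x : V),
      (g • c).1 x = c.1 (g⁻¹ • x) := fun _ _ _ => rfl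
  have h1 := MulAction.sum_card_fixedBy_eq_card_orbits_mul_card_group G
    {c : V → Fin n // ∀ u v : V, Γ.Adj u v → c u ≠ c v}
  have h2 : Nat.card (Quot (fun c c' : {c : V → Fin n // ∀ u v : V, Γ.Adj u v → c u ≠ c v} =>
          ∃ g : G, ∀ x : V, c'.1 x = c.1 (g⁻¹ • x))) =
      Fintype.card (Quotient (MulAction.orbitRel G
        {c : V → Fin n // ∀ u v : V, Γ.Adj u v → c u ≠ c v})) := by
    rw [← Nat.card_eq_fintype_card]
    refine Nat.card_congr (Quot.congrRight ?_)
    intro c c'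
    rw [(MulAction.orbitRel G _).comm', MulAction.orbitRel_apply]
    constructor
    · rintro ⟨g, hg⟩
      exact ⟨g, Subtype.ext (funext fun x => (hg x).symm)⟩
    · rintro ⟨g, rfl⟩
      exact ⟨g, fun x => rfl⟩
  have h3 : ∀ g : G, Nat.card {c : V → Fin n //
            (∀ u v : V, Γ.Adj u v → c u ≠ c v) ∧ ∀ x, c (g⁻¹ • x) = c x} =
      Fintype.card (MulAction.fixedBy
        {c : V → Fin n // ∀ u v : V, Γ.Adj u v → c u ≠ c v} g) := by
    intro g
    rw [← Nat.card_eq_fintype_card]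
    refine Nat.card_congr
      { toFun := fun c => ⟨⟨c.1, c.2.1⟩, Subtype.ext (funext fun x => c.2.2 x)⟩
        invFun := fun c => ⟨c.1.1, c.1.2, fun x => congrFun (congrArg Subtype.val c.2) x⟩
        left_inv := fun _ => rfl
        right_inv := fun _ => rfl }
  rw [h2]
  simp only [h3]
  rw [← Nat.cast_sum, h1, Nat.cast_mul]
  have : (Fintype.card G : ℚ) ≠ 0 := by exact_mod_cast Fintype.card_ne_zero
  field_simp

theorem aux_dir {V : Type*} (Γ : SimpleGraph V) (σ : GraphOri Γ) {u v : V} (h : Γ.Adj u v) :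
    dirAdj Γ σ u v ∨ dirAdj Γ σ v u := by
  have := σ.2 ⟨s(u, v), Γ.mem_edgeSet.mpr h⟩
  rcases Sym2.mem_iff.mp this with h' | h'
  · right
    refine ⟨h.symm, ?_⟩
    have sw : (⟨s(v, u), Γ.mem_edgeSet.mpr h.symm⟩ : Γ.edgeSet) =
        ⟨s(u, v), Γ.mem_edgeSet.mpr h⟩ := Subtype.ext Sym2.eq_swap
    exact (congrArg σ.1 sw).trans h'
  · left
    exact ⟨h, h'⟩

theorem aux_const {V G C : Type*} [Group G] [MulAction G V] (g : G) (c : V → C)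
    (hc : ∀ x, c (g⁻¹ • x) = c x) (u v : V)
    (h : MulAction.orbitRel (Subgroup.zpowers g) V u v) : c u = c v := by
  obtain ⟨⟨k, hk⟩, rfl⟩ := h
  let H : Subgroup G :=
    { carrier := {k | ∀ x, c (k • x) = c x}
      mul_mem' := by
        intro a b ha hb x
        rw [mul_smul, ha, hb]
      one_mem' := by
        intro x
        rw [one_smul]
      inv_mem' := by
        intro a ha x
        rw [← ha, smul_inv_smul] }
  have hg : g ∈ H := inv_mem_iff.mp (show g⁻¹ ∈ H from hc)
  exact (Subgroup.zpowers_le.mpr hg) hk v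

theorem aux_fix {V G : Type*} [Fintype V] [Group G]
    [MulAction G V] (Γ : SimpleGraph V)
    (hact : ∀ (g : G) (u v : V), Γ.Adj u v → Γ.Adj (g • u) (g • v)) (n : ℕ) (g : G) :
    (Nat.card {c : V → Fin n //
            (∀ u v : V, Γ.Adj u v → c u ≠ c v) ∧ ∀ x, c (g⁻¹ • x) = c x} : ℚ) =
      ∑ᶠ σ : {σ : GraphOri Γ // oriAcyclic Γ σ ∧ oriSMulEq Γ hact g σ σ},
            (Nat.card {ψ : Quotient (MulAction.orbitRel (Subgroup.zpowers g) V) → Fin n //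
              ∀ a b, quotDirRel Γ g σ.1 a b → ψ a < ψ b} : ℚ) := by
  classical
  have : Finite (GraphOri Γ) := by unfold GraphOri; infer_instance
  have := Fintype.ofFinite {σ : GraphOri Γ // oriAcyclic Γ σ ∧ oriSMulEq Γ hact g σ σ}
  rw [finsum_eq_sum_of_fintype, ← Nat.cast_sum, ← Nat.card_sigma]
  congr 1
  symm
  let mk : V → Quotient (MulAction.orbitRel (Subgroup.zpowers g) V) := Quotient.mk _
  have hlt : ∀ (σ : GraphOri Γ) (ψ : Quotient (MulAction.orbitRel (Subgroup.zpowers g) V) → Fin n),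
      (∀ a b, quotDirRel Γ g σ a b → ψ a < ψ b) → ∀ u v, dirAdj Γ σ u v →
        ψ (mk u) < ψ (mk v) := fun σ ψ h u v huv =>
    h _ _ ⟨u, v, rfl, rfl, Relation.TransGen.single huv⟩
  refine Nat.card_eq_of_bijective
    (fun p : (Σ σ : {σ : GraphOri Γ // oriAcyclic Γ σ ∧ oriSMulEq Γ hact g σ σ},
      {ψ : Quotient (MulAction.orbitRel (Subgroup.zpowers g) V) → Fin n //
              ∀ a b, quotDirRel Γ g σ.1 a b → ψ a < ψ b}) =>
      (⟨fun x => p.2.1 (mk x), ?_, ?_⟩ : {c : V → Fin n //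
            (∀ u v : V, Γ.Adj u v → c u ≠ c v) ∧ ∀ x, c (g⁻¹ • x) = c x})) ⟨?_, ?_⟩
  · intro u v huv
    rcases aux_dir Γ p.1.1 huv with h | h
    · exact (hlt _ _ p.2.2 _ _ h).ne
    · exact (hlt _ _ p.2.2 _ _ h).ne'
  · intro x
    refine congrArg p.2.1 (Quotient.sound ?_)
    exact ⟨⟨g⁻¹, inv_mem (Subgroup.mem_zpowers g)⟩, rfl⟩
  · rintro ⟨⟨σ, hσ⟩, ⟨ψ, hψ⟩⟩ ⟨⟨σ', hσ'⟩, ⟨ψ', hψ'⟩⟩ h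
    have h0 : ∀ x, ψ (mk x) = ψ' (mk x) := fun x => congrFun (congrArg Subtype.val h) x
    obtain rfl : ψ = ψ' := by
      funext q
      induction q using Quotient.inductionOn with
      | h x => exact h0 x
    obtain rfl : σ = σ' := by
      apply Subtype.ext
      funext ⟨e, he⟩
      induction e using Sym2.ind with
      | _ u v =>
      have hadj : Γ.Adj u v := he
      have a1 := Sym2.mem_iff.mp (σ.2 ⟨s(u, v), he⟩)
      have a2 := Sym2.mem_iff.mp (σ'.2 ⟨s(u, v), he⟩)
      have sw : (⟨s(u, v), he⟩ : Γ.edgeSet) = ⟨s(v, u), hadj.symm⟩ := Subtype.ext Sym2.eq_swap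
      rcases a1 with a1 | a1 <;> rcases a2 with a2 | a2
      · rw [a1, a2]
      · exact absurd (hlt σ ψ hψ v u ⟨hadj.symm, by rw [← sw]; exact a1⟩)
          (hlt σ' ψ hψ' u v ⟨hadj, a2⟩).not_gt
      · exact absurd (hlt σ' ψ hψ' v u ⟨hadj.symm, by rw [← sw]; exact a2⟩)
          (hlt σ ψ hψ u v ⟨hadj, a1⟩).not_gt
      · rw [a1, a2]
    rfl
  · rintro ⟨c, hc, hg⟩
    have hex : ∀ e : Γ.edgeSet, ∃ v ∈ (e : Sym2 V), ∀ u ∈ (e : Sym2 V), c u ≤ c v := by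
      rintro ⟨e, he⟩
      induction e using Sym2.ind with
      | _ u v =>
      rcases le_total (c u) (c v) with h | h
      · exact ⟨v, by simp, by simp [h]⟩
      · exact ⟨u, by simp, by simp [h]⟩
    choose s hs1 hs2 using hex
    have hd : ∀ u v, dirAdj Γ ⟨s, hs1⟩ u v → c u < c v := by
      rintro u v ⟨h, h'⟩
      have h' : s ⟨s(u, v), Γ.mem_edgeSet.mpr h⟩ = v := h'
      have := hs2 ⟨s(u, v), Γ.mem_edgeSet.mpr h⟩ u (by simp)
      rw [h'] at this
      exact lt_of_le_of_ne this (hc u v h)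
    have ht : ∀ u v, Relation.TransGen (dirAdj Γ ⟨s, hs1⟩) u v → c u < c v := by
      intro u v h
      induction h with
      | single h => exact hd _ _ h
      | tail _ h ih => exact ih.trans (hd _ _ h)
    refine ⟨⟨⟨⟨s, hs1⟩, fun v hv => (ht v v hv).false, ?_⟩,
      ⟨Quotient.lift c (fun u v h => aux_const g c hg u v h), ?_⟩⟩, rfl⟩
    · intro u v h
      change s _ = g • s _
      have b1 := Sym2.mem_iff.mp (hs1 ⟨s(u, v), Γ.mem_edgeSet.mpr h⟩)
      have b2 := Sym2.mem_iff.mp (hs1 ⟨s(g⁻¹ • u, g⁻¹ • v), Γ.mem_edgeSet.mpr (hact g⁻¹ u v h)⟩)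
      have m1 := hs2 ⟨s(u, v), Γ.mem_edgeSet.mpr h⟩
      have m2 := hs2 ⟨s(g⁻¹ • u, g⁻¹ • v), Γ.mem_edgeSet.mpr (hact g⁻¹ u v h)⟩
      have u1 := m1 u (by simp)
      have v1 := m1 v (by simp)
      have u2 := m2 (g⁻¹ • u) (by simp)
      have v2 := m2 (g⁻¹ • v) (by simp)
      have hne := hc u v h
      rcases b1 with b1 | b1 <;> rcases b2 with b2 | b2 <;> rw [b1] at u1 v1 ⊢ <;>
        rw [b2] at u2 v2 ⊢ <;> rw [smul_inv_smul] <;> simp only [hg] at u2 v2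
      · exact absurd (le_antisymm u2 v1) hne
      · exact absurd (le_antisymm u1 v2) hne
    · rintro a b ⟨u, v, rfl, rfl, h⟩
      exact ht u v h

/-- A set partition compatible with proper colorings fixed by `g`. -/
def auxGood {V G : Type*} [Group G] [MulAction G V] (Γ : SimpleGraph V) (g : G)
    (s : Setoid V) : Prop :=
  (∀ u v : V, Γ.Adj u v → ¬ s u v) ∧ ∀ x, s (g⁻¹ • x) x

theorem aux_count_s12 {V G : Type*} [Fintype V] [Group G] [MulAction G V] (Γ : SimpleGraph V)
    (n : ℕ) (g : G) [Fintype {s : Setoid V // auxGood Γ g s}] :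
    Nat.card {c : V → Fin n //
            (∀ u v : V, Γ.Adj u v → c u ≠ c v) ∧ ∀ x, c (g⁻¹ • x) = c x} =
      ∑ s : {s : Setoid V // auxGood Γ g s}, n.descFactorial (Nat.card (Quotient s.1)) := by
  classical
  have h1 : ∀ s : {s : Setoid V // auxGood Γ g s},
      n.descFactorial (Nat.card (Quotient s.1)) = Nat.card (Quotient s.1 ↪ Fin n) := by
    intro s
    rw [Nat.card_eq_fintype_card, Nat.card_eq_fintype_card, Fintype.card_embedding_eq,
      Fintype.card_fin]
  simp only [h1]
  rw [← Nat.card_sigma]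
  symm
  refine Nat.card_eq_of_bijective
    (fun p : (Σ s : {s : Setoid V // auxGood Γ g s}, (Quotient s.1 ↪ Fin n)) =>
      (⟨fun x => p.2 (Quotient.mk _ x), ?_, ?_⟩ : {c : V → Fin n //
            (∀ u v : V, Γ.Adj u v → c u ≠ c v) ∧ ∀ x, c (g⁻¹ • x) = c x})) ⟨?_, ?_⟩
  · intro u v huv h
    exact p.1.2.1 u v huv (Quotient.exact (p.2.injective h))
  · intro x
    exact congrArg p.2 (Quotient.sound (p.1.2.2 x))
  · rintro ⟨⟨s, hs⟩, f⟩ ⟨⟨s', hs'⟩, f'⟩ h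
    have h0 : ∀ x, f (Quotient.mk _ x) = f' (Quotient.mk _ x) :=
      fun x => congrFun (congrArg Subtype.val h) x
    obtain rfl : s = s' := by
      ext a b
      constructor
      · intro hab
        have : f (Quotient.mk _ a) = f (Quotient.mk _ b) := congrArg f (Quotient.sound hab)
        rw [h0, h0] at this
        exact Quotient.exact (f'.injective this)
      · intro hab
        have : f' (Quotient.mk _ a) = f' (Quotient.mk _ b) := congrArg f' (Quotient.sound hab)
        rw [← h0, ← h0] at this
        exact Quotient.exact (f.injective this)
    obtain rfl : f = f' := by
      ext q
      induction q using Quotient.inductionOn with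
      | h x => exact congrArg Fin.val (h0 x)
    rfl
  · rintro ⟨c, hc, hg⟩
    exact ⟨⟨⟨Setoid.ker c, fun u v h h' => hc u v h h', fun x => hg x⟩,
      ⟨Setoid.kerLift c, Setoid.kerLift_injective c⟩⟩, rfl⟩

theorem aux_poly {V G : Type*} [Fintype V] [Group G] [Fintype G]
    [MulAction G V] (Γ : SimpleGraph V) :
    ∃ p : Polynomial ℚ, p.degree = (Fintype.card V : WithBot ℕ) ∧
      ∀ n : ℕ, p.eval (n : ℚ) = (Fintype.card G : ℚ)⁻¹ * ∑ g : G,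
          (Nat.card {c : V → Fin n //
            (∀ u v : V, Γ.Adj u v → c u ≠ c v) ∧ ∀ x, c (g⁻¹ • x) = c x} : ℚ) := by
  classical
  have : Finite (Setoid V) :=
    Finite.of_injective (fun s : Setoid V => fun a b => s a b) (by
      intro s t h
      ext a b
      exact iff_of_eq (congrFun (congrFun h a) b))
  have := fun g : G => Fintype.ofFinite {s : Setoid V // auxGood Γ g s}
  have hG : (Fintype.card G : ℚ) ≠ 0 := by exact_mod_cast Fintype.card_ne_zero
  have hmon : ∀ k : ℕ, (descPochhammer ℚ k).Monic := fun k => monic_descPochhammer ℚ k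
  have hdeg : ∀ k : ℕ, (descPochhammer ℚ k).natDegree = k := fun k => descPochhammer_natDegree ℚ k
  have hle : ∀ s : Setoid V, Nat.card (Quotient s) ≤ Fintype.card V := by
    intro s
    rw [Nat.card_eq_fintype_card]
    exact Fintype.card_quotient_le s
  have hco : ∀ s : Setoid V,
      0 ≤ (descPochhammer ℚ (Nat.card (Quotient s))).coeff (Fintype.card V) := by
    intro s
    rcases (hle s).lt_or_eq with h | h
    · rw [Polynomial.coeff_eq_zero_of_natDegree_lt (by rwa [hdeg])]
    · have := (hmon (Nat.card (Quotient s))).coeff_natDegree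
      rw [hdeg, h] at this
      rw [h, this]
      exact zero_le_one
  let q : Polynomial ℚ := ∑ g : G, ∑ s : {s : Setoid V // auxGood Γ g s},
    descPochhammer ℚ (Nat.card (Quotient s.1))
  have hqc : 0 < q.coeff (Fintype.card V) := by
    simp only [q, Polynomial.finsetSum_coeff]
    refine Finset.sum_pos' (fun g _ => Finset.sum_nonneg fun s _ => hco s.1)
      ⟨1, Finset.mem_univ _, ?_⟩
    refine Finset.sum_pos' (fun s _ => hco s.1)
      ⟨⟨⊥, ?_, ?_⟩, Finset.mem_univ _, ?_⟩
    · intro u v h h'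
      exact h.ne h'
    · intro x
      simp
    · have h : Nat.card (Quotient (⊥ : Setoid V)) = Fintype.card V := by
        rw [← Nat.card_eq_fintype_card]
        exact (Nat.card_eq_of_bijective (Quotient.mk (⊥ : Setoid V))
          ⟨fun a b hab => Quotient.exact hab, Quotient.mk_surjective⟩).symm
      have h2 := (hmon (Fintype.card V)).coeff_natDegree
      rw [hdeg] at h2
      change 0 < (descPochhammer ℚ (Nat.card (Quotient (⊥ : Setoid V)))).coeff _
      rw [h, h2]
      exact zero_lt_one
  have hqd : q.degree ≤ (Fintype.card V : WithBot ℕ) := by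
    rw [← Polynomial.natDegree_le_iff_degree_le]
    refine Polynomial.natDegree_sum_le_of_forall_le _ _ fun g _ => ?_
    refine Polynomial.natDegree_sum_le_of_forall_le _ _ fun s _ => ?_
    rw [hdeg]
    exact hle s.1
  refine ⟨Polynomial.C (Fintype.card G : ℚ)⁻¹ * q, ?_, ?_⟩
  · rw [Polynomial.degree_C_mul (inv_ne_zero hG)]
    exact le_antisymm hqd (Polynomial.le_degree_of_ne_zero hqc.ne')
  · intro n
    rw [Polynomial.eval_mul, Polynomial.eval_C]
    congr 1
    simp only [q, Polynomial.eval_finsetSum, aux_count_s12, Nat.cast_sum,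
      descPochhammer_eval_eq_descFactorial]

/-- Let `Γ` be a finite simple graph and `G` a finite group acting on
`Γ` by automorphisms.  For all `n ≥ 1`, the number of `G`-orbits of proper `n`-colorings
satisfies `χ_{Γ,G}(n) = |Col_n(Γ)/G| = (1/|G|) · Σ_{g∈G} Σ_{σ∈Σ^g} Ω°_{Γ^σ_g}(n)`, where
the inner sum ranges over the acyclic orientations of `Γ` fixed by `g` and
`Ω°_{Γ^σ_g}(n)` counts the strictly order preserving maps from the quotient poset
`Γ^σ_g` to `[n]`.  In particular, `χ_{Γ,G}` agrees for all `n ≥ 1` with a polynomial of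
degree `|V|`. -/
theorem stmt_12 {V G : Type*} [Fintype V] [DecidableEq V] [Group G] [Fintype G]
    [MulAction G V] (Γ : SimpleGraph V)
    (hact : ∀ (g : G) (u v : V), Γ.Adj u v → Γ.Adj (g • u) (g • v)) :
    (∀ n : ℕ, 1 ≤ n →
      (Nat.card (Quot (fun c c' : {c : V → Fin n // ∀ u v : V, Γ.Adj u v → c u ≠ c v} =>
          ∃ g : G, ∀ x : V, c'.1 x = c.1 (g⁻¹ • x))) : ℚ) =
        (Fintype.card G : ℚ)⁻¹ * ∑ g : G,
          ∑ᶠ σ : {σ : GraphOri Γ // oriAcyclic Γ σ ∧ oriSMulEq Γ hact g σ σ},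
            (Nat.card {ψ : Quotient (MulAction.orbitRel (Subgroup.zpowers g) V) → Fin n //
              ∀ a b, quotDirRel Γ g σ.1 a b → ψ a < ψ b} : ℚ)) ∧
    ∃ p : Polynomial ℚ, p.degree = (Fintype.card V : WithBot ℕ) ∧
      ∀ n : ℕ, 1 ≤ n →
        p.eval (n : ℚ) =
          Nat.card (Quot (fun c c' : {c : V → Fin n // ∀ u v : V, Γ.Adj u v → c u ≠ c v} =>
            ∃ g : G, ∀ x : V, c'.1 x = c.1 (g⁻¹ • x))) := by
  refine ⟨fun n _ => ?_, ?_⟩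
  · rw [aux_burnside_s12 Γ hact n]
    simp only [aux_fix Γ hact n]
  · obtain ⟨p, hp, h⟩ := aux_poly (G := G) Γ
    exact ⟨p, hp, fun n _ => by rw [h, aux_burnside_s12 Γ hact n]⟩
end

section
/- Let Γ be a finite simple graph, G a finite group acting on Γ by automorphisms, g ∈ G, and n ≥ 1. Then the number of weakly compatible pairs (c,σ) of an n-coloring c and an acyclic orientation σ that are fixed by g satisfies |Σ_n(Γ)^g| = Σ_{σ∈Σ^g} |Hom(Γ^σ,[n])^g|, where the sum ranges over acyclic orientations σ fixed by g and Hom(Γ^σ,[n])^g is the set of g-fixed order preserving maps from the poset Γ^σ to [n]. -/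
theorem weakCompat_iff_aux {V : Type*} (Γ : SimpleGraph V) {n : ℕ} (c : V → Fin n)
    (σ : GraphOri Γ) :
    weakCompat Γ c σ ↔ ∀ u v : V, Relation.TransGen (dirAdj Γ σ) u v → c u ≤ c v := by
  constructor
  · intro h u v huv
    have key : ∀ a b, dirAdj Γ σ a b → c a ≤ c b := by
      rintro a b ⟨hab, hb⟩
      by_contra hlt
      have h1 := h b a hab.symm (not_le.mp hlt)
      have h2 : (⟨s(b, a), Γ.mem_edgeSet.mpr hab.symm⟩ : Γ.edgeSet) =
          ⟨s(a, b), Γ.mem_edgeSet.mpr hab⟩ := Subtype.ext Sym2.eq_swap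
      rw [h2, hb] at h1
      exact hab.ne h1.symm
    induction huv with
    | single hab => exact key _ _ hab
    | tail _ hab ih => exact ih.trans (key _ _ hab)
  · intro h u v huv hlt
    have hm := σ.2 ⟨s(u, v), Γ.mem_edgeSet.mpr huv⟩
    rcases Sym2.mem_iff.mp hm with h1 | h1
    · exfalso
      have h2 : (⟨s(v, u), Γ.mem_edgeSet.mpr huv.symm⟩ : Γ.edgeSet) =
          ⟨s(u, v), Γ.mem_edgeSet.mpr huv⟩ := Subtype.ext Sym2.eq_swap
      exact absurd (h v u (Relation.TransGen.single ⟨huv.symm, by rw [h2]; exact h1⟩))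
        (not_le.mpr hlt)
    · exact h1

/-- Let `Γ` be a finite simple graph, `G` a finite group acting on `Γ`
by automorphisms, `g ∈ G`, and `n ≥ 1`.  Then the number of weakly compatible pairs
`(c,σ)` of an `n`-coloring `c` and an acyclic orientation `σ` that are fixed by `g`
satisfies `|Σ_n(Γ)^g| = Σ_{σ∈Σ^g} |Hom(Γ^σ,[n])^g|`, where the sum ranges over acyclic
orientations `σ` fixed by `g` and `Hom(Γ^σ,[n])^g` is the set of `g`-fixed order
preserving maps from the poset `Γ^σ` to `[n]`. -/
theorem stmt_14 {V G : Type*} [Fintype V] [DecidableEq V] [Group G] [Fintype G]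
    [MulAction G V] (Γ : SimpleGraph V)
    (hact : ∀ (g : G) (u v : V), Γ.Adj u v → Γ.Adj (g • u) (g • v))
    (g : G) (n : ℕ) (hn : 1 ≤ n) :
    Nat.card {p : (V → Fin n) × GraphOri Γ //
        oriAcyclic Γ p.2 ∧ weakCompat Γ p.1 p.2 ∧
        (∀ x : V, p.1 (g⁻¹ • x) = p.1 x) ∧ oriSMulEq Γ hact g p.2 p.2} =
      ∑ᶠ σ : {σ : GraphOri Γ // oriAcyclic Γ σ ∧ oriSMulEq Γ hact g σ σ},
        Nat.card {φ : V → Fin n //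
          (∀ u v : V, Relation.TransGen (dirAdj Γ σ.1) u v → φ u ≤ φ v) ∧
          ∀ x : V, φ (g⁻¹ • x) = φ x} := by
  classical
  haveI : Finite (GraphOri Γ) := by unfold GraphOri; infer_instance
  haveI : Fintype {σ : GraphOri Γ // oriAcyclic Γ σ ∧ oriSMulEq Γ hact g σ σ} :=
    Fintype.ofFinite _
  rw [finsum_eq_sum_of_fintype, ← Nat.card_sigma]
  refine Nat.card_congr
    { toFun := fun p => ⟨⟨p.1.2, p.2.1, p.2.2.2.2⟩,
        ⟨p.1.1, (weakCompat_iff_aux Γ _ _).mp p.2.2.1, p.2.2.2.1⟩⟩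
      invFun := fun q => ⟨(q.2.1, q.1.1), q.1.2.1,
        (weakCompat_iff_aux Γ _ _).mpr q.2.2.1, q.2.2.2, q.1.2.2⟩
      left_inv := fun _ => rfl
      right_inv := fun _ => rfl }
end
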